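/- arXiv:1203.6274 — 8 statements merged into one kernel-verified Lean document; each statement's English description precedes it below -/
import Mathlib

section
/- Let G=(V,E) be a bipartite loopless multigraph, let k ≥ 1 and 1 ≤ ℓ ≤ k−1 be integers, and let x ∈ P^f_cov(G,k). Then the vector (ℓ/k)·x belongs to P_cov(G,ℓ), i.e., (ℓ/k)·x is a convex combination of characteristic vectors of ℓ-edge-covers of G. -/
/-!
The vector `y = (ℓ/k)·x` satisfies `0 ≤ y ≤ 1` and `y(δ(v)) ≥ ℓ` for all `v`, so it is enough to
show that the polytope cut out by these inequalities is integral when the graph is bipartite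
(`mem_convexHull_of_slack_nonneg`).

This is proved by induction on the number of non-tight inequalities at `y`. If `y` is integral, it
is the characteristic vector of an `ℓ`-edge-cover. Otherwise let `F` be the nonempty set of
fractional edges. A vertex `v` with `y(δ(v)) = ℓ` meets either no edge of `F` or at least two, by
integrality of `ℓ` (`degree_ne_one_of_tight`). From this one gets a nonzero `d` supported on `F`
with `d(δ(v)) = 0` at every tight vertex (`exists_direction`): let `T` be the set of tight vertices
that meet `F`. If `|F| > |T|`, dimension counting gives `d`. Otherwise `2|F| ≥ ∑_{v ∈ T} deg_F v ≥
2|T| ≥ 2|F|` forces `|F| = |T|` and both ends of every edge of `F` to be in `T`; then the signed sum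
over the two colour classes of the rows of the square `T × F` incidence matrix vanishes, so that
matrix is singular. Moving from `y` along `d` and along `-d` until a further inequality becomes
tight (`exists_step`) exhibits `y` as a convex combination of two points of the polytope with fewer
non-tight inequalities.
-/

/-- `I` is an `ℓ`-edge-cover of the multigraph with edge-endpoints map `ends`:
every vertex is incident to at least `ℓ` edges of `I`. -/
def IsEdgeCover {V E : Type} [DecidableEq V] (ends : E → Sym2 V)
    (ℓ : ℕ) (I : Finset E) : Prop :=
  ∀ v : V, ℓ ≤ (I.filter fun e => v ∈ ends e).card

/-- The set of characteristic vectors of `ℓ`-edge-covers. -/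
def coverVectors {V E : Type} [DecidableEq V] [DecidableEq E]
    (ends : E → Sym2 V) (ℓ : ℕ) : Set (E → ℝ) :=
  {χ | ∃ I : Finset E, IsEdgeCover ends ℓ I ∧ χ = fun e => if e ∈ I then (1 : ℝ) else 0}

section Polytope

set_option linter.unusedSectionVars false

open Finset

variable {V E : Type} [Fintype V] [Fintype E] [DecidableEq V] [DecidableEq E]

/-! ### The ratio test -/

/-- Ratio test: moving nonnegative slacks `s` in a direction `a` that vanishes on the zero slacks
and decreases some slack, one can stop exactly when the first positive slack becomes zero. -/
lemma exists_step {ι : Type*} [Fintype ι] (s a : ι → ℝ) (hs : ∀ i, 0 ≤ s i)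
    (hsa : ∀ i, s i = 0 → a i = 0) (hneg : ∃ i, a i < 0) :
    ∃ t : ℝ, 0 < t ∧ (∀ i, 0 ≤ s i + t * a i) ∧
      (univ.filter fun i => 0 < s i + t * a i).card < (univ.filter fun i => 0 < s i).card := by
  have hne : (univ.filter fun i => a i < 0).Nonempty := by
    obtain ⟨i, hi⟩ := hneg
    exact ⟨i, by simpa using hi⟩
  obtain ⟨j, hj, hmin⟩ := exists_min_image _ (fun i => s i / (-a i)) hne
  have hj' : a j < 0 := by simpa using hj
  have hsj : 0 < s j := lt_of_le_of_ne (hs j) fun h => hj'.ne (hsa j h.symm)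
  refine ⟨s j / (-a j), div_pos hsj (by linarith), fun i => ?_, ?_⟩
  · by_cases hi : a i < 0
    · have h := hmin i (by simpa using hi)
      rw [le_div_iff₀ (by linarith)] at h
      linarith
    · have : 0 ≤ s j / (-a j) * a i :=
        mul_nonneg (div_nonneg (hs j) (by linarith)) (not_lt.mp hi)
      linarith [hs i]
  · apply card_lt_card
    refine ⟨fun i hi => ?_, fun h => ?_⟩
    · simp only [mem_filter, mem_univ, true_and] at hi ⊢
      refine lt_of_le_of_ne (hs i) fun h => ?_
      rw [hsa i h.symm, ← h] at hi
      simp at hi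
    · have := h (by simpa using hsj : j ∈ univ.filter fun i => 0 < s i)
      simp only [mem_filter, mem_univ, true_and] at this
      have h0 : s j / (-a j) * a j = -s j := by field_simp [hj'.ne]
      linarith

/-! ### Directions supported on fractional edges -/

/-- In a bipartite graph, a nonempty set `F` of edges supports a nonzero vector `d` with
`d(δ(v)) = 0` at every vertex `v` of `T`, provided no vertex of `T` has degree one in `F`. -/
lemma exists_direction (ends : E → Sym2 V) (hloopless : ∀ e, ¬ (ends e).IsDiag)
    (hbip : ∃ f : V → Bool, ∀ e (u w : V), ends e = s(u, w) → f u ≠ f w)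
    (F : Finset E) (hF : F.Nonempty) (T : Finset V)
    (hT : ∀ v ∈ T, (F.filter fun e => v ∈ ends e).card ≠ 1) :
    ∃ d : E → ℝ, d ≠ 0 ∧ (∀ e ∉ F, d e = 0) ∧
      ∀ v ∈ T, ∑ e ∈ univ.filter (fun e => v ∈ ends e), d e = 0 := by
  obtain ⟨f, hf⟩ := hbip
  have hends : ∀ e, ∃ u w, u ≠ w ∧ f u ≠ f w ∧ (univ.filter fun v => v ∈ ends e) = {u, w} := by
    intro e
    obtain ⟨u, w, h⟩ : ∃ u w, ends e = s(u, w) := by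
      induction h : ends e with | _ u w => exact ⟨u, w, rfl⟩
    refine ⟨u, w, fun h' => hloopless e (by rw [h]; simpa using h'), hf e u w h, ?_⟩
    ext v
    simp [h]
  -- Vertices of `T` that miss `F` impose no condition and are discarded.
  set T' := T.filter fun v => (F.filter fun e => v ∈ ends e).card ≠ 0 with hT'
  let A : (F → ℝ) →ₗ[ℝ] (T' → ℝ) :=
    Matrix.mulVecLin (Matrix.of fun (v : T') (e : F) => if v.1 ∈ ends e.1 then (1 : ℝ) else 0)
  have hA : ∀ c v, A c v = ∑ e : F, (if v.1 ∈ ends e.1 then (1 : ℝ) else 0) * c e :=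
    fun c v => rfl
  suffices h : ∃ c, c ≠ 0 ∧ A c = 0 by
    obtain ⟨c, hc0, hc⟩ := h
    have hsum : ∀ v, ∑ e ∈ univ.filter (fun e => v ∈ ends e),
        (if h : e ∈ F then c ⟨e, h⟩ else 0) =
          ∑ e : F, (if v ∈ ends e.1 then (1 : ℝ) else 0) * c e := by
      intro v
      rw [sum_filter, ← sum_subset (subset_univ F), ← sum_coe_sort F]
      · refine sum_congr rfl fun e _ => ?_
        simp
      · intro e _ he
        simp [he]
    refine ⟨fun e => if h : e ∈ F then c ⟨e, h⟩ else 0, fun h => hc0 ?_, fun e he => by simp [he],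
      fun v hv => ?_⟩
    · ext e
      simpa using congrFun h e.1
    · rw [hsum]
      by_cases hv' : v ∈ T'
      · rw [← hA c ⟨v, hv'⟩, hc]
        rfl
      · refine sum_eq_zero fun e _ => ?_
        have h0 : (F.filter fun e => v ∈ ends e) = ∅ := by
          by_contra h
          exact hv' (by simpa [hT', hv] using h)
        have : v ∉ ends e.1 := fun h => by
          have : e.1 ∈ F.filter fun e => v ∈ ends e := by simp [h]
          simp [h0] at this
        simp [this]
  suffices h : ¬ Function.Injective A by
    rw [← LinearMap.ker_eq_bot, LinearMap.ker_eq_bot'] at h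
    push Not at h
    obtain ⟨c, h1, h2⟩ := h
    exact ⟨c, h2, h1⟩
  intro hinj
  have hle : F.card ≤ T'.card := by
    simpa using LinearMap.finrank_le_finrank_of_injective hinj
  -- Double counting of the incidences between the retained vertices and `F`.
  have hdc : ∑ v ∈ T', (F.filter fun e => v ∈ ends e).card
      = ∑ e ∈ F, (T'.filter fun v => v ∈ ends e).card :=
    sum_card_bipartiteAbove_eq_sum_card_bipartiteBelow _
  have hlow : T'.card * 2 ≤ ∑ v ∈ T', (F.filter fun e => v ∈ ends e).card := by
    rw [← smul_eq_mul]
    refine card_nsmul_le_sum _ _ _ fun v hv => ?_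
    have h1 := (mem_filter.mp hv).2
    have h2 := hT v (mem_filter.mp hv).1
    omega
  have hup : ∀ e ∈ F, (T'.filter fun v => v ∈ ends e).card ≤ 2 := by
    intro e _
    obtain ⟨u, w, huw, _, h⟩ := hends e
    rw [← card_pair huw, ← h]
    exact card_le_card (filter_subset_filter _ (subset_univ _))
  have hup' : ∑ e ∈ F, (T'.filter fun v => v ∈ ends e).card ≤ ∑ e ∈ F, 2 := sum_le_sum hup
  have hconst : ∑ e ∈ F, 2 = F.card * 2 := by simp
  have hcard : F.card = T'.card := by omega
  have htwo : ∀ e ∈ F, (T'.filter fun v => v ∈ ends e).card = 2 :=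
    (sum_eq_sum_iff_of_le hup).mp (by omega)
  have hfull : ∀ e ∈ F, ∀ v, v ∈ ends e → v ∈ T' := by
    intro e he v hv
    obtain ⟨u, w, huw, _, h⟩ := hends e
    have heq : (T'.filter fun v => v ∈ ends e) = univ.filter fun v => v ∈ ends e :=
      eq_of_subset_of_card_le (filter_subset_filter _ (subset_univ _))
        (by rw [htwo e he, h, card_pair huw])
    have : v ∈ T'.filter fun v => v ∈ ends e := by rw [heq]; simpa using hv
    exact (mem_filter.mp this).1
  have hsurj : Function.Surjective A :=
    (LinearMap.injective_iff_surjective_of_finrank_eq_finrank (by simpa using hcard)).mp hinj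
  -- The alternating sum of the coordinates vanishes on the range of `A`.
  let σ : V → ℝ := fun v => if f v then 1 else -1
  have hσ : ∀ c, ∑ v : T', σ v.1 * A c v = 0 := by
    intro c
    simp_rw [hA, mul_sum]
    rw [sum_comm]
    refine sum_eq_zero fun e _ => ?_
    have h1 : ∑ v : T', σ v.1 * ((if v.1 ∈ ends e.1 then (1 : ℝ) else 0) * c e)
        = (∑ v ∈ univ.filter (fun v => v ∈ ends e.1), σ v) * c e := by
      rw [sum_coe_sort T' fun v => σ v * ((if v ∈ ends e.1 then (1 : ℝ) else 0) * c e),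
        sum_subset (subset_univ T'), sum_filter, sum_mul]
      · refine sum_congr rfl fun v _ => ?_
        split_ifs <;> simp
      · intro v _ hv
        have : v ∉ ends e.1 := fun h => hv (hfull e.1 e.2 v h)
        simp [this]
    obtain ⟨u, w, huw, hfuw, h⟩ := hends e.1
    rw [h1, h, sum_pair huw]
    have : σ u + σ w = 0 := by
      simp only [σ]
      cases hu : f u <;> cases hw : f w <;> simp_all
    rw [this, zero_mul]
  obtain ⟨v₀, hv₀⟩ : T'.Nonempty := by
    rw [← card_pos, ← hcard]
    exact hF.card_pos
  obtain ⟨c, hc⟩ := hsurj (Pi.single ⟨v₀, hv₀⟩ 1)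
  have h := hσ c
  rw [hc, sum_eq_single ⟨v₀, hv₀⟩ (fun v _ hv => by simp [hv]) (by simp)] at h
  simp only [Pi.single_eq_same, mul_one, σ] at h
  split_ifs at h <;> norm_num at h

/-- If an integer is the sum of numbers in `[0, 1]`, then the number of strictly fractional
summands is not one. -/
lemma degree_ne_one_of_tight (S : Finset E) (y : E → ℝ) (h0 : ∀ e, 0 ≤ y e)
    (h1 : ∀ e, y e ≤ 1) (ℓ : ℕ) (hsum : ∑ e ∈ S, y e = ℓ) :
    (S.filter fun e => 0 < y e ∧ y e < 1).card ≠ 1 := by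
  intro h
  obtain ⟨e₀, he₀⟩ := card_eq_one.mp h
  have hmem : e₀ ∈ S.filter fun e => 0 < y e ∧ y e < 1 := by simp [he₀]
  obtain ⟨-, hpos, hlt⟩ := mem_filter.mp hmem
  have hrest : ∑ e ∈ S.filter (fun e => ¬ (0 < y e ∧ y e < 1)), y e =
      ((S.filter fun e => ¬ (0 < y e ∧ y e < 1)).filter fun e => y e = 1).card := by
    rw [card_filter, Nat.cast_sum]
    refine sum_congr rfl fun e he => ?_
    have he' := (mem_filter.mp he).2
    by_cases hy : y e = 1
    · simp [hy]
    · have : y e = 0 := by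
        by_contra hne
        exact he' ⟨lt_of_le_of_ne (h0 e) (Ne.symm hne), lt_of_le_of_ne (h1 e) hy⟩
      simp [this]
  rw [← sum_filter_add_sum_filter_not S (fun e => 0 < y e ∧ y e < 1), he₀, sum_singleton,
    hrest] at hsum
  generalize (card _) = n at hsum
  have ha : (n : ℝ) < ℓ := by linarith
  have hb : (ℓ : ℝ) < n + 1 := by linarith
  have ha' : n < ℓ := by exact_mod_cast ha
  have hb' : ℓ < n + 1 := by exact_mod_cast hb
  omega

/-! ### Integrality of the fractional edge-cover polytope -/

/-- The slacks of the inequalities `0 ≤ y e`, `y e ≤ 1` and `ℓ ≤ y(δ(v))` at the point `y`. -/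
def slack (ends : E → Sym2 V) (ℓ : ℕ) (y : E → ℝ) : E ⊕ E ⊕ V → ℝ
  | .inl e => y e
  | .inr (.inl e) => 1 - y e
  | .inr (.inr v) => ∑ e ∈ univ.filter (fun e => v ∈ ends e), y e - ℓ

/-- The linear part of `slack`: the rate of change of each slack in the direction `d`. -/
def slackDir (ends : E → Sym2 V) (d : E → ℝ) : E ⊕ E ⊕ V → ℝ
  | .inl e => d e
  | .inr (.inl e) => - d e
  | .inr (.inr v) => ∑ e ∈ univ.filter (fun e => v ∈ ends e), d e

lemma slack_add (ends : E → Sym2 V) (ℓ : ℕ) (y d : E → ℝ) (t : ℝ) (i : E ⊕ E ⊕ V) :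
    slack ends ℓ (y + t • d) i = slack ends ℓ y i + t * slackDir ends d i := by
  rcases i with e | e | v
  · simp [slack, slackDir]
  · simp [slack, slackDir]; ring
  · simp [slack, slackDir, sum_add_distrib, mul_sum]; ring

/-- A point of the polytope that can be moved along `d` without leaving the tight inequalities
reaches a point of the polytope at which fewer inequalities are non-tight. -/
lemma exists_step_slack (ends : E → Sym2 V) (ℓ : ℕ) (y d : E → ℝ)
    (hy : ∀ i, 0 ≤ slack ends ℓ y i) (hd0 : d ≠ 0)
    (hd : ∀ i, slack ends ℓ y i = 0 → slackDir ends d i = 0) :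
    ∃ t : ℝ, 0 < t ∧ (∀ i, 0 ≤ slack ends ℓ (y + t • d) i) ∧
      (univ.filter fun i => 0 < slack ends ℓ (y + t • d) i).card <
        (univ.filter fun i => 0 < slack ends ℓ y i).card := by
  simp_rw [slack_add]
  refine exists_step _ _ hy hd ?_
  obtain ⟨e, he⟩ := Function.ne_iff.mp hd0
  rcases lt_or_gt_of_ne he with h | h
  · exact ⟨.inl e, h⟩
  · exact ⟨.inr (.inl e), neg_lt_zero.mpr h⟩

/-- Integrality of the polytope `0 ≤ y ≤ 1`, `y(δ(v)) ≥ ℓ` of a bipartite multigraph. -/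
lemma mem_convexHull_of_slack_nonneg (ends : E → Sym2 V) (hloopless : ∀ e, ¬ (ends e).IsDiag)
    (hbip : ∃ f : V → Bool, ∀ e (u w : V), ends e = s(u, w) → f u ≠ f w) (ℓ : ℕ)
    (y : E → ℝ) (hy : ∀ i, 0 ≤ slack ends ℓ y i) :
    y ∈ convexHull ℝ (coverVectors ends ℓ) := by
  induction hn : (univ.filter fun i => 0 < slack ends ℓ y i).card using Nat.strong_induction_on
    generalizing y with
  | _ n ih =>
  have h0 : ∀ e, 0 ≤ y e := fun e => hy (.inl e)
  have h1 : ∀ e, y e ≤ 1 := fun e => sub_nonneg.mp (hy (.inr (.inl e)))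
  have hv : ∀ v, (ℓ : ℝ) ≤ ∑ e ∈ univ.filter (fun e => v ∈ ends e), y e :=
    fun v => sub_nonneg.mp (hy (.inr (.inr v)))
  rcases (univ.filter fun e => 0 < y e ∧ y e < 1).eq_empty_or_nonempty with hF | hF
  · apply subset_convexHull
    have hyχ : y = fun e => if e ∈ univ.filter (fun e => y e = 1) then (1 : ℝ) else 0 := by
      ext e
      by_cases h : y e = 1
      · simp [h]
      · have hne : y e = 0 := by
          by_contra hne
          have : e ∈ univ.filter fun e => 0 < y e ∧ y e < 1 := by
            simpa using ⟨lt_of_le_of_ne (h0 e) (Ne.symm hne), lt_of_le_of_ne (h1 e) h⟩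
          simp [hF] at this
        simp [hne]
    refine ⟨univ.filter fun e => y e = 1, fun v => ?_, hyχ⟩
    have h := hv v
    rw [hyχ, ← sum_filter, sum_const, nsmul_eq_mul, mul_one] at h
    have h' : ℓ ≤ _ := Nat.cast_le.mp h
    refine h'.trans (card_le_card fun e he => ?_)
    simp only [mem_filter, mem_univ, true_and] at he ⊢
    exact ⟨he.2, he.1⟩
  · obtain ⟨d, hd0, hdF, hdT⟩ := exists_direction ends hloopless hbip _ hF
      (univ.filter fun v => ∑ e ∈ univ.filter (fun e => v ∈ ends e), y e = ℓ) (by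
        intro v hvT
        have := degree_ne_one_of_tight _ y h0 h1 ℓ (mem_filter.mp hvT).2
        rwa [filter_comm] at this)
    have hd : ∀ i, slack ends ℓ y i = 0 → slackDir ends d i = 0 := by
      rintro (e | e | v) hi
      · have hi' : y e = 0 := hi
        exact hdF e (by simp [hi'])
      · have hi' : y e = 1 := (sub_eq_zero.mp hi).symm
        exact neg_eq_zero.mpr (hdF e (by simp [hi']))
      · exact hdT v (by simpa using sub_eq_zero.mp hi)
    have hd' : ∀ i, slack ends ℓ y i = 0 → slackDir ends (-d) i = 0 := by
      intro i hi
      have := hd i hi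
      rcases i with e | e | v <;> simp_all [slackDir]
    obtain ⟨t, ht, hyt, hct⟩ := exists_step_slack ends ℓ y d hy hd0 hd
    obtain ⟨r, hr, hyr, hcr⟩ := exists_step_slack ends ℓ y (-d) hy (neg_ne_zero.mpr hd0) hd'
    have m1 := ih _ (hn ▸ hct) _ hyt rfl
    have m2 := ih _ (hn ▸ hcr) _ hyr rfl
    have hcomb := (convex_convexHull ℝ (coverVectors ends ℓ)) m1 m2
      (a := r / (t + r)) (b := t / (t + r)) (by positivity) (by positivity) (by field_simp; ring)
    convert hcomb using 1
    ext e
    simp only [Pi.add_apply, Pi.smul_apply, Pi.neg_apply, smul_eq_mul]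
    field_simp
    ring

end Polytope

/-! ### Scaling a fractional cover -/

/-- If `G` is a bipartite loopless multigraph, `1 ≤ ℓ ≤ k - 1`, and `x` lies in the
fractional `k`-edge-cover polytope, then `(ℓ/k)·x` lies in the integral
`ℓ`-edge-cover polytope (the convex hull of characteristic vectors of `ℓ`-edge-covers). -/
theorem small_cover_bipartite_fractional {V E : Type} [Fintype V] [Fintype E]
    [DecidableEq V] [DecidableEq E]
    (ends : E → Sym2 V) (hloopless : ∀ e, ¬ (ends e).IsDiag)
    (hbip : ∃ f : V → Bool, ∀ e (u w : V), ends e = s(u, w) → f u ≠ f w)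
    (k ℓ : ℕ) (hk : 1 ≤ k) (hℓ1 : 1 ≤ ℓ) (hℓk : ℓ ≤ k - 1)
    (x : E → ℝ) (hx0 : ∀ e, 0 ≤ x e) (hx1 : ∀ e, x e ≤ 1)
    (hdeg : ∀ v : V, (k : ℝ) ≤ ∑ e ∈ Finset.univ.filter (fun e => v ∈ ends e), x e) :
    (fun e => (ℓ : ℝ) / k * x e) ∈ convexHull ℝ (coverVectors ends ℓ) := by
  have hk0 : (0 : ℝ) < k := by exact_mod_cast hk
  have hℓk' : (ℓ : ℝ) / k ≤ 1 := by
    rw [div_le_one hk0]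
    exact_mod_cast (by omega : ℓ ≤ k)
  have hq : (0 : ℝ) ≤ (ℓ : ℝ) / k := by positivity
  refine mem_convexHull_of_slack_nonneg ends hloopless hbip ℓ _ ?_
  rintro (e | e | v)
  · exact mul_nonneg hq (hx0 e)
  · exact sub_nonneg.mpr (mul_le_one₀ hℓk' (hx0 e) (hx1 e))
  · refine sub_nonneg.mpr ?_
    rw [← Finset.mul_sum]
    calc (ℓ : ℝ) = ℓ / k * k := by field_simp
      _ ≤ _ := mul_le_mul_of_nonneg_left (hdeg v) hq
end

section
/- Let G=(V,E) be a bipartite loopless multigraph with nonnegative edge costs c : E → ℝ≥0 and minimum degree at least k, where k ≥ 2. Then for every integer ℓ with 1 ≤ ℓ ≤ k−1, G contains an ℓ-edge-cover I ⊆ E of cost c(I) ≤ (ℓ/k)·c(E). -/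
/-- Hall's theorem for a regular bipartite multigraph: `D` is the edge set, and `p`, `q` send an
edge to its left and right endpoint. The map `m` chooses an edge at each left vertex, and these
edges form a perfect matching. -/
theorem exists_matching_of_regular {W D : Type} [Fintype W] [DecidableEq W] [DecidableEq D]
    (p q : D → W) (k : ℕ) (hk : 0 < k) (S : Finset D)
    (hp : ∀ w, (S.filter fun d => p d = w).card = k)
    (hq : ∀ w, (S.filter fun d => q d = w).card = k) :
    ∃ m : W → D, (∀ w, m w ∈ S) ∧ (∀ w, p (m w) = w) ∧ Function.Bijective fun w => q (m w) := by
  classical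
  have hall : ∀ A : Finset W,
      A.card ≤ (A.biUnion fun w => (S.filter fun d => p d = w).image q).card := by
    intro A
    set N := A.biUnion fun w => (S.filter fun d => p d = w).image q with hN
    -- Count the edges leaving `A`: there are `k * #A` of them, and all of them end in `N`.
    have h1 : (S.filter fun d => p d ∈ A).card = A.card * k := by
      rw [Finset.card_eq_sum_card_fiberwise (f := p) (t := A) (by intro d hd; simp_all)]
      rw [Finset.sum_const_nat (m := k)]
      intro w hw
      rw [← hp w, Finset.filter_filter]
      congr 1
      ext d
      simp only [Finset.mem_filter]
      grind
    have h2 : (S.filter fun d => q d ∈ N).card = N.card * k := by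
      rw [Finset.card_eq_sum_card_fiberwise (f := q) (t := N) (by intro d hd; simp_all)]
      rw [Finset.sum_const_nat (m := k)]
      intro w hw
      rw [← hq w, Finset.filter_filter]
      congr 1
      ext d
      simp only [Finset.mem_filter]
      grind
    have h3 : (S.filter fun d => p d ∈ A) ⊆ S.filter fun d => q d ∈ N := by
      intro d hd
      simp only [Finset.mem_filter] at hd ⊢
      refine ⟨hd.1, ?_⟩
      simp only [hN, Finset.mem_biUnion, Finset.mem_image, Finset.mem_filter]
      exact ⟨p d, hd.2, d, ⟨hd.1, rfl⟩, rfl⟩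
    have h4 := Finset.card_le_card h3
    rw [h1, h2] at h4
    exact Nat.le_of_mul_le_mul_right h4 hk
  obtain ⟨g, hg, hgm⟩ := (Finset.all_card_le_biUnion_card_iff_exists_injective _).1 hall
  simp only [Finset.mem_image, Finset.mem_filter] at hgm
  choose m hm hmq using hgm
  refine ⟨m, fun w => (hm w).1, fun w => (hm w).2, ?_⟩
  rw [← Finite.injective_iff_bijective]
  simpa only [hmq] using hg

/-- A `k`-regular bipartite multigraph has a proper edge colouring with `k` colours. -/
theorem exists_colouring_of_regular {W D : Type} [Fintype W] [DecidableEq W] [DecidableEq D]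
    (p q : D → W) (k : ℕ) : ∀ S : Finset D,
    (∀ w, (S.filter fun d => p d = w).card = k) →
    (∀ w, (S.filter fun d => q d = w).card = k) →
    ∃ χ : D → ℕ, (∀ d ∈ S, χ d < k) ∧
      ∀ d ∈ S, ∀ d' ∈ S, χ d = χ d' → (p d = p d' ∨ q d = q d') → d = d' := by
  classical
  induction k with
  | zero =>
    intro S hp _
    have hS : ∀ d, d ∉ S := by
      intro d hd
      have := hp (p d)
      rw [Finset.card_eq_zero, Finset.filter_eq_empty_iff] at this
      exact this hd rfl
    exact ⟨fun _ => 0, fun d hd => (hS d hd).elim, fun d hd => (hS d hd).elim⟩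
  | succ k ih =>
    intro S hp hq
    obtain ⟨m, hmS, hmp, hmb⟩ := exists_matching_of_regular p q (k + 1) k.succ_pos S hp hq
    set M := Finset.univ.image m with hM
    have hMp : ∀ w, ((S \ M).filter fun d => p d = w).card = k := by
      intro w
      have : ((S \ M).filter fun d => p d = w) = (S.filter fun d => p d = w).erase (m w) := by
        ext d
        simp only [Finset.mem_filter, Finset.mem_sdiff, hM, Finset.mem_image, Finset.mem_univ,
          true_and, Finset.mem_erase]
        grind
      rw [this, Finset.card_erase_of_mem (by simp [hmS, hmp]), hp]
      rfl
    have hMq : ∀ w, ((S \ M).filter fun d => q d = w).card = k := by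
      intro w
      obtain ⟨v, hv⟩ := hmb.2 w
      have hinj : ∀ v', q (m v') = w → v' = v := fun v' h => hmb.1 (h.trans hv.symm)
      have : ((S \ M).filter fun d => q d = w) = (S.filter fun d => q d = w).erase (m v) := by
        ext d
        simp only [Finset.mem_filter, Finset.mem_sdiff, hM, Finset.mem_image, Finset.mem_univ,
          true_and, Finset.mem_erase]
        grind
      rw [this, Finset.card_erase_of_mem (by simpa [hmS] using hv), hq]
      rfl
    obtain ⟨χ, hχ, hχi⟩ := ih (S \ M) hMp hMq
    refine ⟨fun d => if d ∈ M then k else χ d, ?_, ?_⟩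
    · intro d hd
      have := hχ d
      simp only [Finset.mem_sdiff] at this
      grind
    · have key : ∀ d ∈ M, ∀ d' ∈ M, (p d = p d' ∨ q d = q d') → d = d' := by
        intro d hd d' hd' h
        simp only [hM, Finset.mem_image, Finset.mem_univ, true_and] at hd hd'
        obtain ⟨v, rfl⟩ := hd
        obtain ⟨v', rfl⟩ := hd'
        rcases h with h | h
        · rw [hmp, hmp] at h
          rw [h]
        · rw [hmb.1 h]
      intro d hd d' hd' h h'
      simp only [Finset.mem_sdiff] at hχ hχi
      by_cases h1 : d ∈ M <;> by_cases h2 : d' ∈ M <;> simp only [h1, h2, if_true, if_false] at h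
      · exact key d h1 d' h2 h'
      · exact absurd h (hχ d' ⟨hd', h2⟩).ne'
      · exact absurd h (hχ d ⟨hd, h1⟩).ne
      · exact hχi d ⟨hd, h1⟩ d' ⟨hd', h2⟩ h h'

/-- The core of Gupta's theorem. The endpoint of `e` on side `t` of the bipartition is `x t e`, and
`f v` is the side of `v`; if `k` incident edges are selected at every vertex, then the edges can be
`k`-coloured so that each selection is rainbow. -/
theorem exists_gupta_colouring {V E : Type} [Fintype V] [Fintype E] [DecidableEq V]
    (f : V → Bool) (x : Bool → E → V) (hf : ∀ t e, f (x t e) = t) (k : ℕ) (S : V → Finset E)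
    (hSk : ∀ v, (S v).card = k) (hSx : ∀ v, ∀ e ∈ S v, x (f v) e = v) :
    ∃ κ : E → ℕ, ∀ v, (∀ e ∈ S v, κ e < k) ∧ Set.InjOn κ (S v) := by
  classical
  -- The auxiliary edge `(t, e)` stands for `e` selected at its endpoint on side `t`.
  let D : Finset (Bool × E) := Finset.univ.filter fun d => d.2 ∈ S (x d.1 d.2)
  let p : Bool × E → V := fun d => x d.1 d.2
  let q : Bool × E → V := fun d => if d.2 ∈ S (x (!d.1) d.2) then x (!d.1) d.2 else x d.1 d.2
  have hp : ∀ v, (D.filter fun d => p d = v).card = k := by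
    intro v
    have : (D.filter fun d => p d = v) = (S v).image fun e => (f v, e) := by
      ext ⟨t, e⟩
      simp only [D, p, Finset.mem_filter, Finset.mem_univ, true_and, Finset.mem_image,
        Prod.mk.injEq]
      grind
    rw [this, Finset.card_image_of_injective _ (fun a b h => by simpa using h), hSk]
  have hq : ∀ v, (D.filter fun d => q d = v).card = k := by
    intro v
    have : (D.filter fun d => q d = v) =
        (S v).image fun e => (if e ∈ S (x (!f v) e) then !f v else f v, e) := by
      ext ⟨t, e⟩
      simp only [D, q, Finset.mem_filter, Finset.mem_univ, true_and, Finset.mem_image,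
        Prod.mk.injEq]
      constructor
      · rintro ⟨h1, h2⟩
        refine ⟨e, ?_, ?_, rfl⟩
        · grind
        · cases t <;> grind
      · rintro ⟨e', h1, h2, rfl⟩
        have := hSx v e' h1
        cases t <;> cases hv : f v <;> grind
    rw [this, Finset.card_image_of_injective _ (fun a b h => (Prod.mk.inj h).2), hSk]
  obtain ⟨χ, hχ, hχi⟩ := exists_colouring_of_regular p q k D hp hq
  -- Of two auxiliary edges coming from the same edge, the colour of the one on side `true` is used.
  let δ : E → Bool × E := fun e => (if e ∈ S (x true e) then true else false, e)
  have hδD : ∀ v, ∀ e ∈ S v, δ e ∈ D := by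
    intro v e he
    have := hSx v e he
    simp only [D, δ, Finset.mem_filter, Finset.mem_univ, true_and]
    cases hv : f v <;> grind
  have hδ : ∀ v, ∀ e ∈ S v, (f v = true → p (δ e) = v) ∧ (f v = false → q (δ e) = v) := by
    intro v e he
    have := hSx v e he
    simp only [p, q, δ]
    cases hv : f v <;> grind
  refine ⟨fun e => χ (δ e), fun v => ⟨fun e he => hχ _ (hδD v e he), ?_⟩⟩
  intro e he e' he' h
  have := hχi _ (hδD v e he) _ (hδD v e' he') h (by
    cases hv : f v
    · exact Or.inr (((hδ v e he).2 hv).trans ((hδ v e' he').2 hv).symm)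
    · exact Or.inl (((hδ v e he).1 hv).trans ((hδ v e' he').1 hv).symm))
  exact (Prod.mk.inj this).2

/-- Some `#K - n` of the elements of `K` have average weight at most that of `K`; they are found by
discarding a heaviest element `n` times. -/
theorem exists_cheap_subset (K : Finset ℕ) (w : ℕ → ℝ) (n : ℕ) (hn : n ≤ K.card) :
    ∃ T ⊆ K, T.card = K.card - n ∧
      (K.card : ℝ) * ∑ i ∈ T, w i ≤ (T.card : ℝ) * ∑ i ∈ K, w i := by
  induction n with
  | zero => exact ⟨K, subset_rfl, rfl, le_rfl⟩
  | succ n ih =>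
    obtain ⟨T, hTK, hT, hle⟩ := ih (by omega)
    have hpos : 0 < T.card := by omega
    obtain ⟨m, hm, hmax⟩ := T.exists_max_image w (Finset.card_pos.1 hpos)
    refine ⟨T.erase m, (T.erase_subset m).trans hTK, ?_, ?_⟩
    · rw [Finset.card_erase_of_mem hm]
      omega
    · have h1 : ∑ i ∈ T, w i ≤ T.card * w m := by
        simpa using Finset.sum_le_card_nsmul T w (w m) hmax
      have h2 := Finset.sum_erase_add T w hm
      have h3 : ((T.erase m).card : ℝ) + 1 = T.card := by
        exact_mod_cast Finset.card_erase_add_one hm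
      have h4 : (0 : ℝ) < T.card := by exact_mod_cast hpos
      have h5 : (0 : ℝ) ≤ K.card := by positivity
      have h6 : (0 : ℝ) ≤ (T.erase m).card := by positivity
      generalize ((T.erase m).card : ℝ) = s at *
      generalize (T.card : ℝ) = t at *
      -- `t * (∑ over T.erase m) ≤ s * (∑ over T)`, because `w m` is at least the average over `T`.
      have h7 : t * ∑ i ∈ T.erase m, w i ≤ s * ∑ i ∈ T, w i := by
        subst h3
        nlinarith
      refine le_of_mul_le_mul_left ?_ h4
      calc t * (K.card * ∑ i ∈ T.erase m, w i) = K.card * (t * ∑ i ∈ T.erase m, w i) := by ring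
        _ ≤ K.card * (s * ∑ i ∈ T, w i) := mul_le_mul_of_nonneg_left h7 h5
        _ = s * (K.card * ∑ i ∈ T, w i) := by ring
        _ ≤ s * (t * ∑ i ∈ K, w i) := mul_le_mul_of_nonneg_left hle h6
        _ = t * (s * ∑ i ∈ K, w i) := by ring

/-- A bipartite loopless multigraph with nonnegative edge costs and minimum degree at
least `k ≥ 2` contains, for every `1 ≤ ℓ ≤ k - 1`, an `ℓ`-edge-cover `I` of cost
at most `(ℓ/k)·c(E)`. -/
theorem small_cover_bipartite_cost {V E : Type} [Fintype V] [Fintype E] [DecidableEq V]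
    (ends : E → Sym2 V) (hloopless : ∀ e, ¬ (ends e).IsDiag)
    (hbip : ∃ f : V → Bool, ∀ e (u w : V), ends e = s(u, w) → f u ≠ f w)
    (c : E → ℝ) (hc : ∀ e, 0 ≤ c e)
    (k ℓ : ℕ) (hk : 2 ≤ k) (hℓ1 : 1 ≤ ℓ) (hℓk : ℓ ≤ k - 1)
    (hdeg : ∀ v : V, k ≤ (Finset.univ.filter fun e => v ∈ ends e).card) :
    ∃ I : Finset E, IsEdgeCover ends ℓ I ∧
      ∑ e ∈ I, c e ≤ (ℓ : ℝ) / k * ∑ e : E, c e := by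
  classical
  obtain ⟨f, hf⟩ := hbip
  have hx : ∀ t e, ∃ v ∈ ends e, f v = t := by
    intro t e
    induction h : ends e using Sym2.ind with
    | h u w =>
      have := hf e u w h
      by_cases hu : f u = t
      · exact ⟨u, by simp, hu⟩
      · exact ⟨w, by simp, by cases t <;> grind⟩
  choose x hxe hxf using hx
  have hend : ∀ e, ∀ v ∈ ends e, x (f v) e = v := by
    intro e v hv
    by_contra hne
    exact hf e _ _ ((Sym2.mem_and_mem_iff hne).1 ⟨hxe _ _, hv⟩) (hxf _ _)
  choose S hS hSk using fun v => Finset.exists_subset_card_eq (hdeg v)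
  have hSe : ∀ v, ∀ e ∈ S v, v ∈ ends e := fun v e he => by simpa using hS v he
  obtain ⟨κ, hκ⟩ := exists_gupta_colouring f x hxf k S hSk fun v e he => hend e v (hSe v e he)
  obtain ⟨T, hTK, hT, hle⟩ := exists_cheap_subset (Finset.range k)
    (fun i => ∑ e with κ e = i, c e) (k - ℓ) (by simp)
  rw [Finset.card_range] at hT hle
  have hTℓ : T.card = ℓ := by omega
  refine ⟨Finset.univ.filter fun e => κ e ∈ T, ?_, ?_⟩
  · intro v
    have himg : (S v).image κ = Finset.range k := by
      apply Finset.eq_of_subset_of_card_le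
      · intro i hi
        obtain ⟨e, he, rfl⟩ := Finset.mem_image.1 hi
        exact Finset.mem_range.2 ((hκ v).1 e he)
      · rw [Finset.card_image_of_injOn (hκ v).2, hSk, Finset.card_range]
    rw [← hTℓ]
    refine le_trans (Finset.card_le_card ?_) (Finset.card_image_le (f := κ))
    intro i hi
    have hi' := hTK hi
    rw [← himg] at hi'
    obtain ⟨e, he, rfl⟩ := Finset.mem_image.1 hi'
    exact Finset.mem_image.2 ⟨e, Finset.mem_filter.2 ⟨by simpa using hi, hSe v e he⟩, rfl⟩
  · have hI : ∑ e with κ e ∈ T, c e = ∑ i ∈ T, ∑ e with κ e = i, c e := by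
      rw [← Finset.sum_fiberwise_of_maps_to (g := κ) (t := T)
        (fun e he => (Finset.mem_filter.1 he).2)]
      refine Finset.sum_congr rfl fun i hi => Finset.sum_congr ?_ fun _ _ => rfl
      ext e
      simp only [Finset.mem_filter, Finset.mem_univ, true_and]
      grind
    -- Edges selected at neither end may have a colour outside `range k`, hence only `≤`.
    have hE : ∑ i ∈ Finset.range k, ∑ e with κ e = i, c e ≤ ∑ e, c e := by
      exact Finset.sum_fiberwise_le_sum_of_sum_fiber_nonneg
        fun i _ => Finset.sum_nonneg fun e _ => hc e
    have hk0 : (0 : ℝ) < k := by exact_mod_cast (by omega : 0 < k)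
    rw [hI, div_mul_eq_mul_div, le_div_iff₀ hk0, mul_comm, ← hTℓ]
    exact hle.trans (mul_le_mul_of_nonneg_left hE (Nat.cast_nonneg _))
end

section
/- Let G=(V,E) be a k-edge-connected loopless multigraph with n = |V| ≥ 2 and k ≥ 2. Then G contains a (k−1)-edge-cover I ⊆ E with |I| ≤ |E| − ⌊n/2⌋. -/
/-!
Passing to the complement of `I`, it is enough to find a set `F` of edges with
`deg_F v ≤ deg v - k + 1` for every vertex `v`, which meets all vertices except possibly one:
such an `F` has at least `⌈(n - 1) / 2⌉ = ⌊n / 2⌋` edges.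

The set `F` is read off a perfect matching of an auxiliary simple graph (`cloneGraph`). A vertex
`v` of the multigraph is represented by one mandatory copy and `deg v - k` optional copies.
Copies of adjacent vertices are adjacent, all optional copies are adjacent to each other, and, if
needed for parity, there is one dummy vertex adjacent to everything. In a perfect matching the
mandatory copy of `v` is matched to a copy of a neighbour of `v` (or to the dummy, for at most one
`v`), and the edges of the multigraph underlying these pairs form `F`.

The perfect matching comes from Tutte's theorem. After deletion of a set `U` of vertices, all the
surviving optional and dummy vertices lie in a single component. Every other component consists of
mandatory copies of the vertices in some set `W`, and the edges leaving `W` all end in the set `S`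
of vertices all of whose copies are in `U`. Each such `W` sends at least `k` edges to `S`, so `k`
times the number of these components is at most `∑ s ∈ S, deg s ≤ k * ∑ s ∈ S, (deg s - k + 1)`,
which is at most `k * |U|` (`k_mul_card_le`). Hence there are at most `|U| + 1` components, and
parity improves the bound on the odd ones to `|U|` (`not_isTutteViolator`).
-/

/-- The set of edges of the multigraph `ends` with exactly one endpoint in `S`. -/
def cut {V E : Type} [Fintype V] [Fintype E] [DecidableEq V]
    (ends : E → Sym2 V) (S : Finset V) : Finset E :=
  Finset.univ.filter fun e => ∃ u w : V, ends e = s(u, w) ∧ u ∈ S ∧ w ∉ S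

/-- The set of edges incident to the vertex `v`. -/
def edgesAt {V E : Type} [Fintype E] [DecidableEq V] (ends : E → Sym2 V) (v : V) : Finset E :=
  Finset.univ.filter fun e => v ∈ ends e

/-- The auxiliary graph in which `v` has the mandatory copy `inl v` and the `a v` optional copies
`inr (inl ⟨v, i⟩)`. The vertices `inr (inr i)` are dummies, adjacent to all other vertices. Distinct
optional copies are always adjacent, and the other adjacencies are those of the multigraph `ends`. -/
def cloneGraph {V E : Type} (ends : E → Sym2 V) (hloopless : ∀ e, ¬ (ends e).IsDiag)
    (a : V → ℕ) (r : ℕ) : SimpleGraph (V ⊕ ((Σ v, Fin (a v)) ⊕ Fin r)) where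
  Adj
    | .inl u, .inl v => ∃ e, ends e = s(u, v)
    | .inl u, .inr (.inl p) => ∃ e, ends e = s(u, p.1)
    | .inr (.inl p), .inl u => ∃ e, ends e = s(u, p.1)
    | .inl _, .inr (.inr _) => True
    | .inr (.inr _), .inl _ => True
    | .inr o, .inr o' => o ≠ o'
  symm := ⟨by
    rintro (u | p | i) (v | q | j) h
    · obtain ⟨e, he⟩ := h
      exact ⟨e, he.trans Sym2.eq_swap⟩
    all_goals first | exact h | exact Ne.symm h⟩
  loopless := ⟨by
    rintro (u | p | i) h
    · obtain ⟨e, he⟩ := h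
      exact hloopless e (by simp [he])
    · exact h rfl
    · exact h rfl⟩

/-- If the disjoint sets `W c` send edges only to a set `S` disjoint from all of them, then the cuts
of the `W c` are disjoint sets of at least `k` edges, each of which has an end in `S`. -/
lemma k_mul_card_le {V E C : Type} [Fintype V] [Fintype E] [DecidableEq V]
    (ends : E → Sym2 V) (k : ℕ)
    (hkec : ∀ S : Finset V, S.Nonempty → S ≠ Finset.univ → k ≤ (cut ends S).card)
    (S : Finset V) (T : Finset C) (W : C → Finset V)
    (hne : ∀ c ∈ T, (W c).Nonempty) (huniv : ∀ c ∈ T, W c ≠ Finset.univ)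
    (hdisj : ∀ c ∈ T, ∀ c' ∈ T, ∀ v, v ∈ W c → v ∈ W c' → c = c')
    (hS : ∀ c ∈ T, ∀ v ∈ W c, v ∉ S)
    (hbd : ∀ c ∈ T, ∀ e u w, ends e = s(u, w) → u ∈ W c → w ∉ W c → w ∈ S) :
    k * T.card ≤ ∑ s ∈ S, (edgesAt ends s).card := by
  classical
  have h1 : k * T.card ≤ ∑ c ∈ T, (cut ends (W c)).card := by
    rw [mul_comm, ← smul_eq_mul]
    exact Finset.card_nsmul_le_sum _ _ _ fun c hc => hkec _ (hne c hc) (huniv c hc)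
  have h2 : ∑ c ∈ T, (cut ends (W c)).card = (T.biUnion fun c => cut ends (W c)).card := by
    rw [Finset.card_biUnion]
    intro c hc c' hc' hcc
    rw [Function.onFun, Finset.disjoint_left]
    intro e he he'
    simp only [cut, Finset.mem_filter, Finset.mem_univ, true_and] at he he'
    obtain ⟨u, w, h, hu, hw⟩ := he
    obtain ⟨u', w', h', hu', hw'⟩ := he'
    have hwS := hbd c hc e u w h hu hw
    rw [h, Sym2.eq_iff] at h'
    rcases h' with ⟨rfl, rfl⟩ | ⟨rfl, rfl⟩
    · exact hcc (hdisj c hc c' hc' _ hu hu')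
    · exact hS c' hc' _ hu' hwS
  have h3 : (T.biUnion fun c => cut ends (W c)) ⊆ S.biUnion (edgesAt ends) := by
    intro e he
    simp only [cut, edgesAt, Finset.mem_biUnion, Finset.mem_filter, Finset.mem_univ, true_and] at he ⊢
    obtain ⟨c, hc, u, w, h, hu, hw⟩ := he
    exact ⟨w, hbd c hc e u w h hu hw, by simp [h]⟩
  calc k * T.card ≤ _ := h1
    _ = _ := h2
    _ ≤ _ := Finset.card_le_card h3
    _ ≤ _ := Finset.card_biUnion_le

section
variable {V E : Type} [Fintype V] [Fintype E] [DecidableEq V]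
    (ends : E → Sym2 V) (k : ℕ)

lemma k_le_star (hn : 2 ≤ Fintype.card V)
    (hkec : ∀ S : Finset V, S.Nonempty → S ≠ Finset.univ → k ≤ (cut ends S).card) (v : V) :
    k ≤ (edgesAt ends v).card := by
  refine (hkec {v} (by simp) ?_).trans (Finset.card_le_card ?_)
  · intro h
    have := congrArg Finset.card h
    rw [Finset.card_singleton, Finset.card_univ] at this
    omega
  · intro e he
    simp only [cut, edgesAt, Finset.mem_filter, Finset.mem_univ, true_and, Finset.mem_singleton]
      at he ⊢
    obtain ⟨u, w, h, rfl, -⟩ := he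
    simp [h]

/-- Tutte's condition for the auxiliary graph. Vertices that survive the deletion of `U` lie in the
component of the optional and dummy vertices or in one of the components counted by
`k_mul_card_le`. -/
lemma not_isTutteViolator (hloopless : ∀ e, ¬ (ends e).IsDiag) (hn : 2 ≤ Fintype.card V) (hk : 2 ≤ k)
    (hkec : ∀ S : Finset V, S.Nonempty → S ≠ Finset.univ → k ≤ (cut ends S).card) (r : ℕ)
    (heven : Even (Nat.card (V ⊕ ((Σ v, Fin ((edgesAt ends v).card - k)) ⊕ Fin r))))
    (U : Set (V ⊕ ((Σ v, Fin ((edgesAt ends v).card - k)) ⊕ Fin r))) :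
    ¬ (cloneGraph ends hloopless (fun v => (edgesAt ends v).card - k) r).IsTutteViolator U := by
  classical
  have hdeg := k_le_star ends k hn hkec
  set a : V → ℕ := fun v => (edgesAt ends v).card - k with ha
  set H := cloneGraph ends hloopless a r with hH
  unfold SimpleGraph.IsTutteViolator
  set K := ((⊤ : H.Subgraph).deleteVerts U).coe with hK
  -- The component of a surviving vertex.
  let q : ∀ x, x ∉ U → K.ConnectedComponent := fun x hx => K.connectedComponentMk ⟨x, trivial, hx⟩
  have q_adj : ∀ x y hx hy, H.Adj x y → q x hx = q y hy := by
    intro x y hx hy h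
    apply SimpleGraph.ConnectedComponent.connectedComponentMk_eq_of_adj
    simp [hK, hx, hy, h]
  have q_surj : ∀ c, ∃ x hx, q x hx = c := by
    intro c
    induction c using SimpleGraph.ConnectedComponent.ind with
    | h v => exact ⟨v.1, v.2.2, rfl⟩
  have q_inr : ∀ o o' ho ho', q (.inr o) ho = q (.inr o') ho' := by
    intro o o' ho ho'
    by_cases h : o = o'
    · subst h; rfl
    · refine q_adj _ _ ho ho' ?_
      rcases o with o | o <;> rcases o' with o' | o' <;> exact h
  -- The components that have only mandatory copies.
  let T : Finset K.ConnectedComponent := Finset.univ.filter fun c => ∀ o ho, q (.inr o) ho ≠ c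
  let W : K.ConnectedComponent → Finset V := fun c => Finset.univ.filter fun v =>
    ∃ h, q (.inl v) h = c
  let S : Finset V := Finset.univ.filter fun v => .inl v ∈ U ∧ ∀ i, .inr (.inl ⟨v, i⟩) ∈ U
  have hTc : Fintype.card K.ConnectedComponent ≤ T.card + 1 := by
    have h1 : (Finset.univ \ T).card ≤ 1 := by
      rw [Finset.card_le_one]
      intro c hc c' hc'
      simp only [T, Finset.mem_sdiff, Finset.mem_univ, Finset.mem_filter, true_and, not_forall,
        not_not] at hc hc'
      obtain ⟨o, ho, rfl⟩ := hc
      obtain ⟨o', ho', rfl⟩ := hc'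
      exact q_inr _ _ ho ho'
    have h2 := Finset.le_card_sdiff T (Finset.univ : Finset K.ConnectedComponent)
    rw [Finset.card_univ] at h2
    omega
  have hne : ∀ c ∈ T, (W c).Nonempty := by
    intro c hc
    obtain ⟨x | o, hx, rfl⟩ := q_surj c
    · exact ⟨x, Finset.mem_filter.mpr ⟨Finset.mem_univ _, hx, rfl⟩⟩
    · simp only [T, Finset.mem_filter, Finset.mem_univ, true_and] at hc
      exact absurd rfl (hc o hx)
  have hdisj : ∀ c c' : K.ConnectedComponent, ∀ v, v ∈ W c → v ∈ W c' → c = c' := by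
    intro c c' v h h'
    simp only [W, Finset.mem_filter, Finset.mem_univ, true_and] at h h'
    obtain ⟨h, rfl⟩ := h
    obtain ⟨h', rfl⟩ := h'
    rfl
  have hbd : ∀ c ∈ T, ∀ e u w, ends e = s(u, w) → u ∈ W c → w ∉ W c → w ∈ S := by
    intro c hc e u w he hu hw
    simp only [T, W, S, Finset.mem_filter, Finset.mem_univ, true_and] at hc hu hw ⊢
    obtain ⟨hu, rfl⟩ := hu
    constructor
    · by_contra hwU
      exact hw ⟨hwU, q_adj _ _ hwU hu ⟨e, he.trans Sym2.eq_swap⟩⟩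
    · intro i
      by_contra hwU
      exact hc _ hwU (q_adj _ _ hwU hu ⟨e, he⟩)
  have hcomp : Fintype.card K.ConnectedComponent ≤ U.ncard + 1 := by
    by_cases huniv : ∀ c ∈ T, W c ≠ Finset.univ
    · have h1 := k_mul_card_le ends k hkec S T W hne huniv
        (fun c _ c' _ => hdisj c c')
        (fun c _ v hv hvS => by
          simp only [W, S, Finset.mem_filter, Finset.mem_univ, true_and] at hv hvS
          exact hv.1 hvS.1) hbd
      have h2 : ∑ s ∈ S, (edgesAt ends s).card ≤ k * ∑ s ∈ S, (1 + a s) := by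
        rw [Finset.mul_sum]
        refine Finset.sum_le_sum fun s _ => ?_
        have := hdeg s
        have h3 : (edgesAt ends s).card = k + a s := by simp only [ha]; omega
        rw [h3]
        nlinarith
      have h3 : ∑ s ∈ S, (1 + a s) ≤ U.ncard := by
        -- All the copies of the vertices in `S`.
        let D : Finset (V ⊕ ((Σ v, Fin (a v)) ⊕ Fin r)) :=
          S.disjSum ((S.sigma fun _ => Finset.univ).disjSum ∅)
        have h4 : (D : Set (V ⊕ ((Σ v, Fin (a v)) ⊕ Fin r))).ncard = ∑ s ∈ S, (1 + a s) := by
          rw [Set.ncard_coe_finset]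
          simp [D, Finset.card_disjSum, Finset.sum_add_distrib]
        rw [← h4]
        apply Set.ncard_le_ncard _ (Set.toFinite U)
        rintro (v | ⟨v, i⟩ | i) h
        · simp [D, S] at h
          exact h.1
        · simp [D, S] at h
          exact h.2 i
        · simp [D] at h
      have h4 : T.card ≤ U.ncard :=
        Nat.le_of_mul_le_mul_left (h1.trans (h2.trans (Nat.mul_le_mul_left k h3))) (by omega)
      omega
    · -- A component of mandatory copies that contains all of them is the only component.
      push Not at huniv
      obtain ⟨c, hc, hcu⟩ := huniv
      have hin : ∀ v, ∃ h, q (.inl v) h = c := by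
        intro v
        have : v ∈ W c := by rw [hcu]; simp
        simpa [W] using this
      have : ∀ c', c' = c := by
        intro c'
        obtain ⟨x | p | i, hx, rfl⟩ := q_surj c'
        · obtain ⟨h, h'⟩ := hin x
          exact h'
        · obtain ⟨e, he⟩ : (edgesAt ends p.1).Nonempty := by
            rw [← Finset.card_pos]
            have := hdeg p.1
            omega
          simp only [edgesAt, Finset.mem_filter, Finset.mem_univ, true_and] at he
          obtain ⟨w, hw⟩ := he
          obtain ⟨h, rfl⟩ := hin w
          exact q_adj _ _ hx h ⟨e, hw.trans Sym2.eq_swap⟩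
        · have : Nonempty V := Fintype.card_pos_iff.mp (by omega)
          obtain ⟨v⟩ := this
          obtain ⟨h, rfl⟩ := hin v
          exact q_adj _ _ hx h trivial
      have : Fintype.card K.ConnectedComponent ≤ 1 :=
        Fintype.card_le_one_iff.mpr fun x y => (this x).trans (this y).symm
      omega
  have hodd : K.oddComponents.ncard ≤ U.ncard + 1 := by
    refine le_trans ?_ hcomp
    rw [← Nat.card_eq_fintype_card]
    exact Set.ncard_le_card _
  have hpar := K.odd_ncard_oddComponents
  have hcard : Nat.card ((⊤ : H.Subgraph).deleteVerts U).verts + U.ncard =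
      Nat.card (V ⊕ ((Σ v, Fin (a v)) ⊕ Fin r)) := by
    have : ((⊤ : H.Subgraph).deleteVerts U).verts = Uᶜ := by ext; simp
    rw [this, Nat.card_coe_set_eq, add_comm]
    exact Set.ncard_add_ncard_compl U
  rw [← hcard] at heven
  rw [Nat.even_add, ← Nat.not_odd_iff_even, ← hpar, Nat.not_odd_iff_even] at heven
  intro hlt
  have : K.oddComponents.ncard = U.ncard + 1 := by omega
  rw [this, Nat.even_add_one] at heven
  tauto

/-- There is a set `F` of edges that leaves every vertex with degree at least `k - 1` when it is
removed and is as large as needed: the edges underlying a perfect matching of the auxiliary graph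
restricted to pairs with a mandatory copy. Matching pairs may share an underlying edge, so `F` is
bounded below by the number of vertices it meets. -/
lemma exists_removable (hloopless : ∀ e, ¬ (ends e).IsDiag) (hn : 2 ≤ Fintype.card V) (hk : 2 ≤ k)
    (hkec : ∀ S : Finset V, S.Nonempty → S ≠ Finset.univ → k ≤ (cut ends S).card) :
    ∃ F : Finset E, (∀ v, (F.filter fun e => v ∈ ends e).card ≤ 1 + ((edgesAt ends v).card - k)) ∧
      Fintype.card V ≤ 2 * F.card + 1 := by
  classical
  have hdeg := k_le_star ends k hn hkec
  set a : V → ℕ := fun v => (edgesAt ends v).card - k with ha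
  obtain ⟨r, hr, heven⟩ : ∃ r ≤ 1, Even (Nat.card (V ⊕ ((Σ v, Fin (a v)) ⊕ Fin r))) := by
    refine ⟨(Fintype.card V + ∑ v, a v) % 2, by omega, ?_⟩
    simp only [Nat.card_eq_fintype_card, Fintype.card_sum, Fintype.card_sigma, Fintype.card_fin]
    rw [Nat.even_iff]
    omega
  set H := cloneGraph ends hloopless a r with hH
  obtain ⟨M, hM⟩ : ∃ M : H.Subgraph, M.IsPerfectMatching :=
    SimpleGraph.tutte.mpr fun U => not_isTutteViolator ends k hloopless hn hk hkec r heven U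
  rw [SimpleGraph.Subgraph.isPerfectMatching_iff] at hM
  choose p hp hpu using hM
  have hpp : ∀ x y, p x = y → p y = x := by
    rintro x y rfl
    exact (hpu _ _ (hp x).symm).symm
  have hV : Nonempty V := Fintype.card_pos_iff.mp (by omega)
  have hE : Nonempty E := by
    obtain ⟨v⟩ := hV
    obtain ⟨e, -⟩ : (edgesAt ends v).Nonempty := by
      rw [← Finset.card_pos]
      have := hdeg v
      omega
    exact ⟨e⟩
  -- The vertex that a vertex of the auxiliary graph is a copy of, arbitrary for dummies.
  let own : V ⊕ ((Σ v, Fin (a v)) ⊕ Fin r) → V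
    | .inl v => v
    | .inr (.inl q) => q.1
    | .inr (.inr _) => Classical.choice hV
  let g : Sym2 V → E := Function.invFun ends
  have hg : ∀ s, (∃ e, ends e = s) → ends (g s) = s := fun s hs => Function.invFun_eq hs
  let A : Finset V := Finset.univ.filter fun v => ∀ i, p (.inl v) ≠ .inr (.inr i)
  let f : V ⊕ ((Σ v, Fin (a v)) ⊕ Fin r) → E := fun x => g s(own x, own (p x))
  have hf : ∀ x, f (p x) = f x := by
    intro x
    simp only [f]
    rw [hpp x _ rfl, Sym2.eq_swap]
  have hfe : ∀ v ∈ A, ends (f (.inl v)) = s(v, own (p (.inl v))) := by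
    intro v hv
    simp only [A, Finset.mem_filter, Finset.mem_univ, true_and] at hv
    apply hg
    have hadj : H.Adj (.inl v) (p (.inl v)) := (hp (.inl v)).adj_sub
    rcases hpv : p (.inl v) with u | q | i
    · rw [hpv] at hadj
      exact hadj
    · rw [hpv] at hadj
      exact hadj
    · exact absurd hpv (hv i)
  refine ⟨A.image fun v => f (.inl v), ?_, ?_⟩
  · intro v
    -- Every chosen edge at `v` belongs to the matching edge at some copy of `v`.
    have hsub : ((A.image fun v => f (.inl v)).filter fun e => v ∈ ends e) ⊆
        insert (f (.inl v)) (Finset.univ.image fun i : Fin (a v) => f (.inr (.inl ⟨v, i⟩))) := by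
      intro e he
      simp only [Finset.mem_filter, Finset.mem_image] at he
      obtain ⟨⟨u, hu, rfl⟩, hv⟩ := he
      rw [hfe u hu, Sym2.mem_iff] at hv
      simp only [Finset.mem_insert, Finset.mem_image, Finset.mem_univ, true_and]
      rcases hv with rfl | hv
      · exact Or.inl rfl
      · simp only [A, Finset.mem_filter, Finset.mem_univ, true_and] at hu
        have hfu := hf (.inl u)
        rcases hpv : p (.inl u) with w | ⟨w, i⟩ | i
        · rw [hpv] at hv hfu
          simp only [own] at hv
          subst hv
          exact Or.inl hfu.symm
        · rw [hpv] at hv hfu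
          simp only [own] at hv
          subst hv
          exact Or.inr ⟨i, hfu⟩
        · exact absurd hpv (hu i)
    refine (Finset.card_le_card hsub).trans ((Finset.card_insert_le _ _).trans ?_)
    have := Finset.card_image_le (s := Finset.univ)
      (f := fun i : Fin (a v) => f (.inr (.inl ⟨v, i⟩)))
    rw [Finset.card_univ, Fintype.card_fin] at this
    change _ ≤ 1 + a v
    omega
  · have h1 : (Finset.univ \ A).card ≤ 1 := by
      rw [Finset.card_le_one]
      intro u hu v hv
      simp only [A, Finset.mem_sdiff, Finset.mem_univ, Finset.mem_filter, true_and, not_forall,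
        not_not] at hu hv
      obtain ⟨i, hi⟩ := hu
      obtain ⟨j, hj⟩ := hv
      have hij : i = j := by
        ext
        omega
      subst hij
      exact Sum.inl_injective ((hpp _ _ hi).symm.trans (hpp _ _ hj))
    have h2 := Finset.le_card_sdiff A (Finset.univ : Finset V)
    rw [Finset.card_univ] at h2
    have h3 : A ⊆ (A.image fun v => f (.inl v)).biUnion fun e => (ends e).toFinset := by
      intro v hv
      simp only [Finset.mem_biUnion, Finset.mem_image, Sym2.mem_toFinset]
      exact ⟨_, ⟨v, hv, rfl⟩, by rw [hfe v hv]; simp⟩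
    have h4 := (Finset.card_le_card h3).trans (Finset.card_biUnion_le_card_mul _ _ 2 fun e _ => by
      rw [Sym2.card_toFinset]; split <;> omega)
    omega

end

/-- A `k`-edge-connected loopless multigraph on `n ≥ 2` vertices, `k ≥ 2`, contains a
`(k-1)`-edge-cover `I` with `|I| ≤ |E| - ⌊n/2⌋`. -/
theorem small_cover_kec_size {V E : Type} [Fintype V] [Fintype E] [DecidableEq V]
    (ends : E → Sym2 V) (hloopless : ∀ e, ¬ (ends e).IsDiag)
    (hn : 2 ≤ Fintype.card V) (k : ℕ) (hk : 2 ≤ k)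
    (hkec : ∀ S : Finset V, S.Nonempty → S ≠ Finset.univ → k ≤ (cut ends S).card) :
    ∃ I : Finset E, IsEdgeCover ends (k - 1) I ∧
      I.card ≤ Fintype.card E - Fintype.card V / 2 := by
  classical
  obtain ⟨F, hF, hcard⟩ := exists_removable ends k hloopless hn hk hkec
  refine ⟨Fᶜ, fun v => ?_, ?_⟩
  · have h1 : (edgesAt ends v).card ≤
        (F.filter fun e => v ∈ ends e).card + (Fᶜ.filter fun e => v ∈ ends e).card := by
      refine le_trans (Finset.card_le_card ?_) (Finset.card_union_le _ _)
      intro e he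
      simp only [edgesAt, Finset.mem_filter, Finset.mem_univ, true_and] at he
      by_cases h : e ∈ F <;> simp [h, he]
    have h2 := hF v
    have h3 := k_le_star ends k hn hkec v
    omega
  · rw [Finset.card_compl]
    omega
end

section
/- Let G=(V,E) be a bipartite loopless multigraph with n = |V| and minimum degree at least k, where k ≥ 2. Then G contains a (k−1)-edge-cover I ⊆ E with |I| ≤ |E| − n/2. -/
/-- A bipartite multigraph of maximum degree at most `k` has a matching containing at least a
`1 / k` fraction of its edges. The edge `e` joins `p e` on the left to `q e` on the right. -/
lemma exists_large_matching {E α β : Type} [Fintype E] [DecidableEq α] [DecidableEq β]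
    (p : E → α) (q : E → β) (k : ℕ) (hk : 1 ≤ k)
    (hp : ∀ a, (Finset.univ.filter fun e => p e = a).card ≤ k)
    (hq : ∀ b, (Finset.univ.filter fun e => q e = b).card ≤ k) :
    ∃ J : Finset E, Set.InjOn p J ∧ Set.InjOn q J ∧ Fintype.card E ≤ k * J.card := by
  classical
  set L := (Finset.univ : Finset E).image p with hL
  -- `m` is `|E| / k` rounded up
  obtain ⟨m, hm1, hm2⟩ : ∃ m, Fintype.card E ≤ k * m ∧ ∀ x, Fintype.card E ≤ k * x → m ≤ x :=
    ⟨Nat.find (p := fun m => Fintype.card E ≤ k * m) ⟨Fintype.card E, by nlinarith⟩,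
      Nat.find_spec (p := fun m => Fintype.card E ≤ k * m) _,
      fun x hx => Nat.find_min' _ hx⟩
  -- Hall's theorem is applied after adding `|L| - m` dummy right vertices joined to all of `L`.
  let t : L → Finset (β ⊕ Fin (L.card - m)) := fun a =>
    ((Finset.univ.filter fun e => p e = a.1).image q).disjSum Finset.univ
  have hall : ∀ S : Finset L, S.card ≤ (S.biUnion t).card := by
    intro S
    rcases S.eq_empty_or_nonempty with rfl | ⟨s, hs⟩
    · simp
    set N := S.biUnion fun a => (Finset.univ.filter fun e => p e = a.1).image q with hN
    have hsub : N.disjSum (Finset.univ : Finset (Fin (L.card - m))) ⊆ S.biUnion t := by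
      intro x hx
      rcases x with x | x
      · simpa [t, hN] using hx
      · simp only [Finset.mem_biUnion]
        exact ⟨s, hs, by simp [t]⟩
    have h1 := Finset.card_le_card hsub
    rw [Finset.card_disjSum, Finset.card_univ, Fintype.card_fin] at h1
    set S' : Finset α := S.map (Function.Embedding.subtype _) with hS'
    have hS'L : S' ⊆ L := by
      intro a ha
      simp only [hS', Finset.mem_map] at ha
      obtain ⟨b, -, rfl⟩ := ha
      exact b.2
    have hcS : S'.card = S.card := Finset.card_map _
    -- every edge meets `L \ S'` or `N`, so these form a vertex cover
    have h2 : (Finset.univ : Finset E) ⊆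
        ((L \ S').biUnion fun a => Finset.univ.filter fun e => p e = a) ∪
          (N.biUnion fun b => Finset.univ.filter fun e => q e = b) := by
      intro e _
      by_cases he : p e ∈ S'
      · refine Finset.mem_union_right _ ?_
        simp only [hS', Finset.mem_map] at he
        obtain ⟨b, hb, hbe⟩ := he
        simp only [Finset.mem_biUnion, Finset.mem_filter, Finset.mem_univ, true_and,
          exists_eq_right', hN, Finset.mem_image]
        exact ⟨b, hb, e, hbe.symm, rfl⟩
      · refine Finset.mem_union_left _ ?_
        simp only [Finset.mem_biUnion, Finset.mem_filter, Finset.mem_univ, true_and,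
          exists_eq_right', Finset.mem_sdiff]
        exact ⟨Finset.mem_image_of_mem _ (Finset.mem_univ _), he⟩
    have h3 := (Finset.card_le_card h2).trans (Finset.card_union_le _ _)
    have h4 := Finset.card_biUnion_le_card_mul (L \ S')
      (fun a => Finset.univ.filter fun e => p e = a) k (fun a _ => hp a)
    have h5 := Finset.card_biUnion_le_card_mul N
      (fun b => Finset.univ.filter fun e => q e = b) k (fun b _ => hq b)
    rw [Finset.card_univ] at h3
    have h6 := hm2 ((L \ S').card + N.card) (by nlinarith)
    have h7 := Finset.card_sdiff_add_card_eq_card hS'L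
    omega
  obtain ⟨g, hginj, hg⟩ := (Finset.all_card_le_biUnion_card_iff_exists_injective t).1 hall
  have hmL : m ≤ L.card := by
    apply hm2
    have h2 := Finset.card_le_mul_card_image (f := p) (Finset.univ : Finset E) k (fun a _ => hp a)
    simpa [Finset.card_univ] using h2
  -- `c a` is an edge at `a` realising the matched pair when `g a` is not a dummy vertex
  have hc : ∀ a : L, ∃ e, p e = a.1 ∧ ∀ b, g a = Sum.inl b → q e = b := by
    intro a
    obtain ⟨e, -, he⟩ := Finset.mem_image.1 a.2
    have h := hg a
    cases hga : g a with
    | inl b =>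
      rw [hga] at h
      simp only [t, Finset.inl_mem_disjSum, Finset.mem_image, Finset.mem_filter, Finset.mem_univ,
        true_and] at h
      obtain ⟨e', h1, h2⟩ := h
      exact ⟨e', h1, fun b' hb' => h2.trans (Sum.inl_injective hb')⟩
    | inr i => exact ⟨e, he, fun b' hb' => by cases hb'⟩
  choose c hcp hcq using hc
  have hcinj : Function.Injective c := fun a b hab =>
    Subtype.ext (by rw [← hcp a, ← hcp b, hab])
  let L' := (Finset.univ : Finset L).filter fun a => (g a).isLeft
  have hcompl : (Finset.univ.filter fun a : L => ¬ (g a).isLeft = true).card ≤ L.card - m := by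
    have h : (Finset.univ.filter fun a : L => ¬ (g a).isLeft = true).card ≤
        ((∅ : Finset β).disjSum (Finset.univ : Finset (Fin (L.card - m)))).card := by
      apply Finset.card_le_card_of_injOn g
      · intro a ha
        simp only [Finset.coe_filter, Finset.mem_univ, true_and, Set.mem_ofPred_eq] at ha
        cases hga : g a <;> simp [hga] at ha ⊢
      · exact hginj.injOn
    simpa using h
  have hcard := Finset.card_filter_add_card_filter_not (s := (Finset.univ : Finset L))
    (fun a => (g a).isLeft = true)
  rw [Finset.card_univ, Fintype.card_coe] at hcard
  refine ⟨L'.image c, ?_, ?_, ?_⟩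
  · intro x hx y hy hxy
    simp only [Finset.coe_image, Set.mem_image] at hx hy
    obtain ⟨a, -, rfl⟩ := hx
    obtain ⟨b, -, rfl⟩ := hy
    rw [hcp, hcp] at hxy
    rw [Subtype.ext hxy]
  · intro x hx y hy hxy
    simp only [Finset.coe_image, Set.mem_image] at hx hy
    obtain ⟨a, ha, rfl⟩ := hx
    obtain ⟨b, hb, rfl⟩ := hy
    simp only [L', Finset.coe_filter, Finset.mem_univ, true_and, Set.mem_ofPred_eq,
      Sum.isLeft_iff] at ha hb
    obtain ⟨a', ha⟩ := ha
    obtain ⟨b', hb⟩ := hb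
    rw [hcq a a' ha, hcq b b' hb] at hxy
    rw [hginj (ha.trans (hxy ▸ hb.symm))]
  · rw [Finset.card_image_of_injective _ hcinj]
    exact hm1.trans (Nat.mul_le_mul_left k (by simp only [L']; omega))

/-- The edges are split between copies of their endpoints `u e`, the copy being numbered by `idx`:
copies of `v` are numbered from `0` to `d v - k`, and each has degree at most `k`. -/
lemma exists_split {V E : Type} [Fintype E] [DecidableEq V] (u : E → V) (k : ℕ) (hk : 1 ≤ k)
    (hdeg : ∀ e, k ≤ (Finset.univ.filter fun e' => u e' = u e).card) :
    ∃ idx : E → ℕ,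
      (∀ e, idx e < (Finset.univ.filter fun e' => u e' = u e).card - (k - 1)) ∧
      ∀ a : V × ℕ, (Finset.univ.filter fun e => (u e, idx e) = a).card ≤ k := by
  classical
  have key : ∀ v : V, ∃ r : E → ℕ,
      Set.InjOn r {e | u e = v} ∧
      ∀ e, u e = v → r e < (Finset.univ.filter fun e' => u e' = v).card := by
    intro v
    let F := Finset.univ.filter fun e' => u e' = v
    refine ⟨fun e => if h : e ∈ F then (F.equivFin ⟨e, h⟩ : ℕ) else 0, ?_, ?_⟩
    · intro x hx y hy hxy
      have hx' : x ∈ F := by simpa [F] using hx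
      have hy' : y ∈ F := by simpa [F] using hy
      simp only [hx', hy', dite_true] at hxy
      simpa using F.equivFin.injective (Fin.ext hxy)
    · intro e he
      have he' : e ∈ F := by simpa [F] using he
      simp only [he', dite_true]
      exact (F.equivFin ⟨e, he'⟩).2
  choose r hr1 hr2 using key
  -- Truncated subtraction sends the `k` smallest ranks to copy `0`.
  refine ⟨fun e => r (u e) e - (k - 1), ?_, ?_⟩
  · intro e
    have := hr2 (u e) e rfl
    have := hdeg e
    dsimp only
    omega
  · rintro ⟨v, i⟩
    have : (Finset.univ.filter fun e => (u e, r (u e) e - (k - 1)) = (v, i)).card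
        ≤ (Finset.Ico i (i + k)).card := by
      apply Finset.card_le_card_of_injOn (r v)
      · intro e he
        simp only [Finset.coe_filter, Finset.mem_univ, true_and, Set.mem_ofPred_eq,
          Prod.mk.injEq] at he
        obtain ⟨rfl, h2⟩ := he
        simp only [Finset.coe_Ico, Set.mem_Ico]
        omega
      · apply (hr1 v).mono
        intro e he
        simp only [Finset.coe_filter, Finset.mem_univ, true_and, Set.mem_ofPred_eq,
          Prod.mk.injEq] at he
        exact he.1
    simpa using this

/-- A set of edges using each copy of a vertex at most once leaves at least `k - 1` edges at
that vertex. -/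
lemma le_card_compl {V E : Type} [Fintype E] [DecidableEq V] [DecidableEq E] (u : E → V) (k : ℕ)
    (hk : 1 ≤ k) (idx : E → ℕ)
    (hidx : ∀ e, idx e < (Finset.univ.filter fun e' => u e' = u e).card - (k - 1))
    (J : Finset E) (hJ : Set.InjOn (fun e => (u e, idx e)) J) (v : V)
    (hv : k ≤ (Finset.univ.filter fun e => u e = v).card) :
    k - 1 ≤ (Jᶜ.filter fun e => u e = v).card := by
  have h1 : (J.filter fun e => u e = v).card ≤
      (Finset.range ((Finset.univ.filter fun e => u e = v).card - (k - 1))).card := by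
    apply Finset.card_le_card_of_injOn idx
    · intro e he
      simp only [Finset.coe_filter, Set.mem_ofPred_eq] at he
      obtain ⟨-, rfl⟩ := he
      simpa using hidx e
    · intro x hx y hy hxy
      simp only [Finset.coe_filter, Set.mem_ofPred_eq] at hx hy
      exact hJ hx.1 hy.1 (Prod.ext (hx.2.trans hy.2.symm) hxy)
  rw [Finset.card_range] at h1
  have h2 : (Finset.univ.filter fun e => u e = v).card =
      (J.filter fun e => u e = v).card + (Jᶜ.filter fun e => u e = v).card := by
    rw [← Finset.card_union_of_disjoint, ← Finset.filter_union, Finset.union_compl]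
    exact Finset.disjoint_filter_filter disjoint_compl_right
  omega

/-- A bipartite loopless multigraph on `n` vertices with minimum degree at least
`k ≥ 2` contains a `(k-1)`-edge-cover `I` with `|I| ≤ |E| - n/2`. -/
theorem small_cover_bipartite_size {V E : Type} [Fintype V] [Fintype E] [DecidableEq V]
    (ends : E → Sym2 V) (hloopless : ∀ e, ¬ (ends e).IsDiag)
    (hbip : ∃ f : V → Bool, ∀ e (u w : V), ends e = s(u, w) → f u ≠ f w)
    (k : ℕ) (hk : 2 ≤ k)
    (hdeg : ∀ v : V, k ≤ (Finset.univ.filter fun e => v ∈ ends e).card) :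
    ∃ I : Finset E, IsEdgeCover ends (k - 1) I ∧
      (I.card : ℝ) ≤ (Fintype.card E : ℝ) - (Fintype.card V : ℝ) / 2 := by
  classical
  obtain ⟨f, hf⟩ := hbip
  have hends : ∀ e, ∃ u w, ends e = s(u, w) ∧ f u = false ∧ f w = true := by
    intro e
    obtain ⟨⟨a, b⟩, hab⟩ := Sym2.mk_surjective (ends e)
    have hab' : ends e = s(a, b) := hab.symm
    have := hf e a b hab'
    cases ha : f a <;> cases hb : f b
    · simp [ha, hb] at this
    · exact ⟨a, b, hab', ha, hb⟩
    · exact ⟨b, a, hab'.trans Sym2.eq_swap, hb, ha⟩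
    · simp [ha, hb] at this
  choose u w huw hu hw using hends
  have hmemu : ∀ v, f v = false → ∀ e, v ∈ ends e ↔ u e = v := by
    intro v hv e
    rw [huw, Sym2.mem_iff]
    constructor
    · rintro (h | h)
      · exact h.symm
      · have := hw e
        rw [← h, hv] at this
        cases this
    · exact fun h => Or.inl h.symm
  have hmemw : ∀ v, f v = true → ∀ e, v ∈ ends e ↔ w e = v := by
    intro v hv e
    rw [huw, Sym2.mem_iff]
    constructor
    · rintro (h | h)
      · have := hu e
        rw [← h, hv] at this
        cases this
      · exact h.symm
    · exact fun h => Or.inr h.symm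
  have hdu : ∀ v, f v = false → k ≤ (Finset.univ.filter fun e => u e = v).card := by
    intro v hv
    simpa only [hmemu v hv] using hdeg v
  have hdw : ∀ v, f v = true → k ≤ (Finset.univ.filter fun e => w e = v).card := by
    intro v hv
    simpa only [hmemw v hv] using hdeg v
  obtain ⟨iu, hiu, hiu'⟩ := exists_split u k (by omega) (fun e => hdu _ (hu e))
  obtain ⟨iw, hiw, hiw'⟩ := exists_split w k (by omega) (fun e => hdw _ (hw e))
  obtain ⟨J, hJu, hJw, hJ⟩ := exists_large_matching (fun e => (u e, iu e)) (fun e => (w e, iw e)) k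
    (by omega) hiu' hiw'
  refine ⟨Jᶜ, ?_, ?_⟩
  · intro v
    cases hv : f v
    · simp only [hmemu v hv]
      exact le_card_compl u k (by omega) iu hiu J hJu v (hdu v hv)
    · simp only [hmemw v hv]
      exact le_card_compl w k (by omega) iw hiw J hJw v (hdw v hv)
  · have hsum : Fintype.card V * k ≤ Fintype.card E + Fintype.card E := by
      have h1 := Finset.card_eq_sum_card_fiberwise (f := u) (s := Finset.univ)
        (t := Finset.univ) (fun _ _ => Finset.mem_coe.2 (Finset.mem_univ _))
      have h2 := Finset.card_eq_sum_card_fiberwise (f := w) (s := Finset.univ)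
        (t := Finset.univ) (fun _ _ => Finset.mem_coe.2 (Finset.mem_univ _))
      rw [Finset.card_univ] at h1 h2
      nth_rewrite 1 [h1]
      rw [h2, ← Finset.sum_add_distrib, ← smul_eq_mul, ← Finset.card_univ]
      apply Finset.card_nsmul_le_sum
      intro v _
      cases hv : f v
      · exact (hdu v hv).trans (Nat.le_add_right _ _)
      · exact (hdw v hv).trans (Nat.le_add_left _ _)
    have hVJ : Fintype.card V ≤ 2 * J.card := by
      have : k * Fintype.card V ≤ k * (2 * J.card) := by nlinarith
      exact Nat.le_of_mul_le_mul_left this (by omega)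
    have hc := Finset.card_add_card_compl J
    have hVJ' : (Fintype.card V : ℝ) ≤ 2 * J.card := by exact_mod_cast hVJ
    have hc' : (J.card : ℝ) + (Jᶜ.card : ℝ) = Fintype.card E := by exact_mod_cast hc
    linarith
end

section
/- Let G=(V,E) be a loopless multigraph, let 1 ≤ ℓ ≤ k−1 be integers, let x ∈ P^f_con(G,k), let S be a nonempty proper subset of V, and let F ⊆ δ(S). Then (ℓ/k)·(x(ζ(S)) − x(F)) ≥ ℓ·|S|/2 − (|F|−1)/2. -/
/-- The set of edges of the multigraph `ends` with at least one endpoint in `S`. -/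
def zeta {V E : Type} [Fintype E] [DecidableEq V]
    (ends : E → Sym2 V) (S : Finset V) : Finset E :=
  Finset.univ.filter fun e => ∃ v ∈ S, v ∈ ends e

lemma mem_cut_iff {V E : Type} [Fintype V] [Fintype E] [DecidableEq V]
    {ends : E → Sym2 V} {S : Finset V} {e : E} {a b : V} (h : ends e = s(a, b)) :
    e ∈ cut ends S ↔ (a ∈ S ∧ b ∉ S) ∨ (b ∈ S ∧ a ∉ S) := by
  simp only [cut, Finset.mem_filter, Finset.mem_univ, true_and, h, Sym2.eq_iff]
  constructor
  · rintro ⟨u, w, ⟨rfl, rfl⟩ | ⟨rfl, rfl⟩, hu, hw⟩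
    · exact Or.inl ⟨hu, hw⟩
    · exact Or.inr ⟨hu, hw⟩
  · rintro (⟨ha, hb⟩ | ⟨hb, ha⟩)
    · exact ⟨a, b, Or.inl ⟨rfl, rfl⟩, ha, hb⟩
    · exact ⟨b, a, Or.inr ⟨rfl, rfl⟩, hb, ha⟩

lemma mem_zeta_iff {V E : Type} [Fintype E] [DecidableEq V]
    {ends : E → Sym2 V} {S : Finset V} {e : E} {a b : V} (h : ends e = s(a, b)) :
    e ∈ zeta ends S ↔ a ∈ S ∨ b ∈ S := by
  simp only [zeta, Finset.mem_filter, Finset.mem_univ, true_and, h, Sym2.mem_iff]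
  grind

/-- The handshake identity: an edge inside `S` is counted twice by the degrees in `S`, and an
edge of `δ(S)` once by the degrees and once by `x(δ(S))`. -/
lemma sum_cut_singleton_add_cut {V E : Type} [Fintype V] [Fintype E] [DecidableEq V]
    (ends : E → Sym2 V) (hloopless : ∀ e, ¬ (ends e).IsDiag) (x : E → ℝ) (S : Finset V) :
    (∑ v ∈ S, ∑ e ∈ cut ends {v}, x e) + ∑ e ∈ cut ends S, x e
      = 2 * ∑ e ∈ zeta ends S, x e := by
  classical
  have key : ∀ T : Finset E, ∑ e ∈ T, x e = ∑ e, if e ∈ T then x e else 0 := by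
    intro T
    simp
  simp_rw [key]
  rw [Finset.sum_comm, ← Finset.sum_add_distrib, Finset.mul_sum]
  refine Finset.sum_congr rfl fun e _ => ?_
  obtain ⟨a, b, h⟩ : ∃ a b, ends e = s(a, b) :=
    Sym2.ind (f := fun z => ∃ a b, z = s(a, b)) (fun a b => ⟨a, b, rfl⟩) (ends e)
  have hab : a ≠ b := by
    have := hloopless e
    rwa [h, Sym2.mk_isDiag_iff] at this
  have hsum : (∑ v ∈ S, if e ∈ cut ends {v} then x e else 0)
      = (if a ∈ S then x e else 0) + (if b ∈ S then x e else 0) := by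
    rw [← Finset.sum_ite_eq' S a (fun _ => x e), ← Finset.sum_ite_eq' S b (fun _ => x e),
      ← Finset.sum_add_distrib]
    refine Finset.sum_congr rfl fun v _ => ?_
    simp only [mem_cut_iff h, Finset.mem_singleton]
    grind
  rw [hsum]
  simp only [mem_cut_iff h, mem_zeta_iff h]
  by_cases ha : a ∈ S <;> by_cases hb : b ∈ S <;> simp [ha, hb] <;> ring

/-- The numerical core, with `D = x(δ(S))`, `y = x(F)` and `f = |F|`. -/
lemma boundary_estimate {k l D y f : ℝ} (hl : 1 ≤ l) (hlk : l + 1 ≤ k) (hf : 0 ≤ f)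
    (hD : k ≤ D) (hyD : y ≤ D) (hyf : y ≤ f) :
    k * (1 - f) ≤ l * (D - 2 * y) := by
  rcases le_total f k with hfk | hfk
  · have h1 : l * (k - 2 * f) ≤ l * (D - 2 * y) :=
      mul_le_mul_of_nonneg_left (by linarith) (by linarith)
    -- `l (k - 2 f) - k (1 - f) = (k - f) (l - 1) + f (k - l - 1)`, interpolating `f = 0` and `f = k`
    have h2 : 0 ≤ (k - f) * (l - 1) := mul_nonneg (by linarith) (by linarith)
    have h3 : 0 ≤ f * (k - l - 1) := mul_nonneg hf (by linarith)
    linarith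
  · have h1 : l * (-f) ≤ l * (D - 2 * y) :=
      mul_le_mul_of_nonneg_left (by linarith) (by linarith)
    have h2 : 0 ≤ f * (k - l - 1) := mul_nonneg hf (by linarith)
    linarith

/-- Inequality (4) of the paper: for `x` in the fractional `k`-edge-connectivity
polytope, a nonempty proper `S ⊂ V` and `F ⊆ δ(S)`,
`(ℓ/k)·(x(ζ(S)) - x(F)) ≥ ℓ·|S|/2 - (|F|-1)/2`. -/
theorem scaled_cover_inequality {V E : Type} [Fintype V] [Fintype E] [DecidableEq V]
    (ends : E → Sym2 V) (hloopless : ∀ e, ¬ (ends e).IsDiag)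
    (k ℓ : ℕ) (hℓ1 : 1 ≤ ℓ) (hℓk : ℓ ≤ k - 1)
    (x : E → ℝ) (hx0 : ∀ e, 0 ≤ x e) (hx1 : ∀ e, x e ≤ 1)
    (hcon : ∀ S : Finset V, S.Nonempty → S ≠ Finset.univ →
      (k : ℝ) ≤ ∑ e ∈ cut ends S, x e)
    (S : Finset V) (hS : S.Nonempty) (hSV : S ≠ Finset.univ)
    (F : Finset E) (hF : F ⊆ cut ends S) :
    (ℓ : ℝ) / k * ((∑ e ∈ zeta ends S, x e) - ∑ e ∈ F, x e) ≥
      (ℓ : ℝ) * S.card / 2 - ((F.card : ℝ) - 1) / 2 := by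
  have hlk : (ℓ : ℝ) + 1 ≤ k := by
    have : ℓ + 1 ≤ k := by omega
    exact_mod_cast this
  have hl : (1 : ℝ) ≤ ℓ := by exact_mod_cast hℓ1
  have hk : (0 : ℝ) < k := by linarith
  have hdeg : (S.card : ℝ) * k ≤ ∑ v ∈ S, ∑ e ∈ cut ends {v}, x e := by
    rw [← nsmul_eq_mul]
    refine Finset.card_nsmul_le_sum S _ _ fun v hv => hcon {v} (Finset.singleton_nonempty v) ?_
    -- if `{v}` were all of `V`, then so would be `S ⊇ {v}`
    intro hv'
    refine hSV (Finset.univ_subset_iff.mp ?_)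
    rw [← hv']
    exact Finset.singleton_subset_iff.mpr hv
  have hyf : ∑ e ∈ F, x e ≤ F.card := by
    simpa using Finset.sum_le_card_nsmul F x 1 fun e _ => hx1 e
  have hyD : ∑ e ∈ F, x e ≤ ∑ e ∈ cut ends S, x e :=
    Finset.sum_le_sum_of_subset_of_nonneg hF fun e _ _ => hx0 e
  have hhand := sum_cut_singleton_add_cut ends hloopless x S
  have hbd := boundary_estimate hl hlk (Nat.cast_nonneg F.card) (hcon S hS hSV) hyD hyf
  have hmul := mul_le_mul_of_nonneg_left hdeg (by linarith : (0 : ℝ) ≤ ℓ)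
  rw [ge_iff_le, div_mul_eq_mul_div, le_div_iff₀ hk]
  have hscaled := congrArg (fun t => (ℓ : ℝ) * t) hhand
  linarith
end

section
/- Let G=(V,E) be a loopless multigraph, let 1 ≤ ℓ ≤ k−1 be integers, let x ∈ P^f_con(G,k), let S be a nonempty proper subset of V, and let F ⊆ δ(S). Then x(δ(S)) − x(F) + ((k−ℓ)/ℓ)·|F| ≥ k/ℓ. -/
/-- Inequality (5) of the paper: for `x` in the fractional `k`-edge-connectivity
polytope, a nonempty proper `S ⊂ V` and `F ⊆ δ(S)`,
`x(δ(S)) - x(F) + ((k-ℓ)/ℓ)·|F| ≥ k/ℓ`. -/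
theorem cut_cover_inequality {V E : Type} [Fintype V] [Fintype E] [DecidableEq V]
    (ends : E → Sym2 V) (hloopless : ∀ e, ¬ (ends e).IsDiag)
    (k ℓ : ℕ) (hℓ1 : 1 ≤ ℓ) (hℓk : ℓ ≤ k - 1)
    (x : E → ℝ) (hx0 : ∀ e, 0 ≤ x e) (hx1 : ∀ e, x e ≤ 1)
    (hcon : ∀ S : Finset V, S.Nonempty → S ≠ Finset.univ →
      (k : ℝ) ≤ ∑ e ∈ cut ends S, x e)
    (S : Finset V) (hS : S.Nonempty) (hSV : S ≠ Finset.univ)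
    (F : Finset E) (hF : F ⊆ cut ends S) :
    (∑ e ∈ cut ends S, x e) - (∑ e ∈ F, x e) +
      ((k : ℝ) - ℓ) / ℓ * F.card ≥ (k : ℝ) / ℓ := by
  have hkl : ℓ + 1 ≤ k := by omega
  have hklR : (ℓ : ℝ) + 1 ≤ k := by exact_mod_cast hkl
  have hl : (1 : ℝ) ≤ ℓ := by exact_mod_cast hℓ1
  have hA := hcon S hS hSV
  have hsub : ∑ e ∈ F, x e ≤ ∑ e ∈ cut ends S, x e :=
    Finset.sum_le_sum_of_subset_of_nonneg hF fun e _ _ => hx0 e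
  have hFc : ∑ e ∈ F, x e ≤ (F.card : ℝ) := by
    simpa using Finset.sum_le_sum (s := F) fun e _ => hx1 e
  have hc : (0 : ℝ) ≤ F.card := Nat.cast_nonneg _
  generalize (∑ e ∈ cut ends S, x e) = A at *
  generalize (∑ e ∈ F, x e) = B at *
  generalize (F.card : ℝ) = c at *
  generalize (k : ℝ) = k' at *
  generalize (ℓ : ℝ) = l at *
  have hl0 : 0 < l := by linarith
  have key : k' ≤ (A - B) * l + (k' - l) * c := by
    rcases le_or_gt k' (c * (k' - l)) with h | h
    · nlinarith [mul_nonneg (sub_nonneg.2 hsub) hl0.le]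
    · have h1 : (k' - c) * l ≤ (A - B) * l :=
        mul_le_mul_of_nonneg_right (by linarith) hl0.le
      have h2 : 0 ≤ k' * (l - 1) + c * (k' - 2 * l) := by
        rcases le_or_gt (2 * l) k' with h3 | h3
        · exact add_nonneg (mul_nonneg (by linarith) (by linarith))
            (mul_nonneg hc (by linarith))
        · have hd : 0 < k' - l := by linarith
          refine nonneg_of_mul_nonneg_right ?_ hd
          have h4 : 0 ≤ k' * l * (k' - l - 1) :=
            mul_nonneg (mul_nonneg (by linarith) hl0.le) (by linarith)
          have h5 : 0 ≤ (2 * l - k') * (k' - c * (k' - l)) :=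
            mul_nonneg (by linarith) (by linarith)
          linarith
      linarith
  rw [ge_iff_le, div_le_iff₀ hl0]
  calc k' ≤ (A - B) * l + (k' - l) * c := key
    _ = (A - B + (k' - l) / l * c) * l := by field_simp
end

section
/- Let d and f be real numbers and let m be a nonnegative integer, and let 1 ≤ ℓ ≤ k−1 be integers. If d ≥ k, f ≤ d, and f ≤ m, then d − f + ((k−ℓ)/ℓ)·m ≥ k/ℓ. -/
/-- The core arithmetic inequality behind inequality (5) of the paper: if
`1 ≤ ℓ ≤ k - 1`, `d ≥ k`, `f ≤ d` and `f ≤ m`, then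
`d - f + ((k-ℓ)/ℓ)·m ≥ k/ℓ`. -/
theorem core_arith_inequality (d f : ℝ) (m : ℕ) (k ℓ : ℕ)
    (hℓ1 : 1 ≤ ℓ) (hℓk : ℓ ≤ k - 1)
    (hd : (k : ℝ) ≤ d) (hfd : f ≤ d) (hfm : f ≤ (m : ℝ)) :
    d - f + ((k : ℝ) - ℓ) / ℓ * m ≥ (k : ℝ) / ℓ := by
  have hk : (ℓ : ℝ) + 1 ≤ k := by exact_mod_cast (by omega : ℓ + 1 ≤ k)
  have hl : (1 : ℝ) ≤ ℓ := by exact_mod_cast hℓ1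
  have hl0 : (0 : ℝ) < ℓ := by linarith
  have hm : (0 : ℝ) ≤ m := Nat.cast_nonneg m
  -- After clearing `ℓ`, both coefficients `ℓ` and `k - ℓ` are at least `1`, so the left side is
  -- at least `(d - f) + m ≥ d ≥ k`.
  have h1 : d - f ≤ ℓ * (d - f) := le_mul_of_one_le_left (by linarith) hl
  have h2 : (m : ℝ) ≤ (k - ℓ) * m := le_mul_of_one_le_left hm (by linarith)
  have key : d - f + ((k : ℝ) - ℓ) / ℓ * m = (ℓ * (d - f) + (k - ℓ) * m) / ℓ := by
    field_simp
  rw [key, ge_iff_le]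
  gcongr
  linarith
end

section
/- Let G'=(V,E') be a simple undirected graph on n vertices that contains a k-connected spanning subgraph, where k ≥ 1 and n ≥ k+1, and let opt denote the minimum number of edges of a k-connected spanning subgraph of G'. Then G' contains a k-connected spanning subgraph with at most (1 − 1/k)·opt + n edges. -/
/-!
Every `k`-connected graph `G` on `n` vertices has a `k`-connected spanning subgraph with at most
`k * n` edges. Applied to an optimal subgraph of `G'`, this gives `opt ≤ k * n`, that is,
`opt ≤ (1 - 1 / k) * opt + n`, so the optimal subgraph itself has the required size.

The sparse subgraph is the Nagamochi–Ibaraki certificate. Scan the vertices one at a time, always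
choosing an unscanned vertex with the largest number of scanned neighbours, and let every vertex
keep only the edges to the first `k` of its neighbours scanned before it. Each vertex is charged at
most `k` edges. For `k`-connectivity, let `T` have fewer than `k` vertices and let `A`, `B` cover
the remaining vertices with no kept edge between `A` and `B`. Throughout the scan, one of `A`, `B`
has no unscanned vertex with more than `|T ∩ S|` scanned neighbours, where `S` is the scanned set.
If scanning `x ∈ A` discarded an edge to `w ∈ B`, then `w`, and by the choice of `x` also `x`, would
have at least `k > |T ∩ S|` scanned neighbours, contradicting this. Hence `G` has no edge between
`A` and `B` either: a set separating the certificate separates `G`.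
-/

/-- A simple graph `G` on a finite vertex set is `k`-connected if deleting any set of
fewer than `k` vertices leaves a connected (in particular nonempty) graph. -/
def KConnected {V : Type} (k : ℕ) (G : SimpleGraph V) : Prop :=
  ∀ T : Finset V, T.card < k → (G.induce ((↑T : Set V)ᶜ)).Connected

open Classical in
/-- The number of `G`-neighbours of `w` in `S`. -/
noncomputable def scanDeg {V : Type} (G : SimpleGraph V) (S : Finset V) (w : V) : ℕ :=
  (S.filter fun y => G.Adj y w).card

open Classical in
lemma scanDeg_insert {V : Type} (G : SimpleGraph V) {S : Finset V} {x : V} (hx : x ∉ S) (w : V) :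
    scanDeg G (insert x S) w = scanDeg G S w + if G.Adj x w then 1 else 0 := by
  unfold scanDeg
  rw [Finset.filter_insert]
  split_ifs with h
  · rw [Finset.card_insert_of_notMem]
    simp [hx]
  · simp

/-- No edge of `H` joins `A` to `B`, and together with `T` these sets cover all vertices.
Disjointness is not required. -/
def Separates {V : Type} (H : SimpleGraph V) (T : Finset V) (A B : Set V) : Prop :=
  (∀ v, v ∈ T ∨ v ∈ A ∨ v ∈ B) ∧ ∀ a ∈ A, ∀ b ∈ B, ¬ H.Adj a b

lemma Separates.symm {V : Type} {H : SimpleGraph V} {T : Finset V} {A B : Set V}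
    (h : Separates H T A B) : Separates H T B A :=
  ⟨fun v => by have := h.1 v; tauto, fun b hb a ha hab => h.2 a ha b hb hab.symm⟩

open Classical in
/-- The invariant of the scan: `S` is the set of scanned vertices, `H` consists of the edges kept
so far, and `c w` is the number of edges charged to `w`. -/
structure ScanState {V : Type} [Fintype V] (G : SimpleGraph V) (k : ℕ) (S : Finset V)
    (H : SimpleGraph V) (c : V → ℕ) : Prop where
  le : H ≤ G
  card_le : H.edgeSet.ncard ≤ ∑ w, c w
  charge_le : ∀ w, c w ≤ k
  charge_le_deg : ∀ w, w ∉ S → c w ≤ scanDeg G S w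
  one_side : ∀ (T : Finset V) (A B : Set V), T.card < k → Separates H T A B →
    (∀ w ∈ A, w ∉ S → scanDeg G S w ≤ (T ∩ S).card) ∨
    (∀ w ∈ B, w ∉ S → scanDeg G S w ≤ (T ∩ S).card)
  no_edge : ∀ (T : Finset V) (A B : Set V), T.card < k → Separates H T A B →
    ∀ a ∈ A, a ∈ S → ∀ b ∈ B, ¬ G.Adj a b

/-- The graph of the edges kept when `x` is scanned: those from `x` to unscanned neighbours having
fewer than `k` scanned neighbours. -/
def newEdges {V : Type} (G : SimpleGraph V) (k : ℕ) (S : Finset V) (x : V) : SimpleGraph V :=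
  SimpleGraph.fromRel fun a b => a = x ∧ G.Adj x b ∧ b ∉ S ∧ scanDeg G S b < k

lemma newEdges_adj {V : Type} {G : SimpleGraph V} {k : ℕ} {S : Finset V} {x w : V}
    (h : G.Adj x w) (hw : w ∉ S) (hd : scanDeg G S w < k) : (newEdges G k S x).Adj x w := by
  simp only [newEdges, SimpleGraph.fromRel_adj]
  exact ⟨h.ne, Or.inl ⟨by trivial, h, hw, hd⟩⟩

open Classical in
lemma ScanState.step {V : Type} [Fintype V] {G : SimpleGraph V} {k : ℕ} {S : Finset V}
    {H : SimpleGraph V} {c : V → ℕ} (h : ScanState G k S H c) {x : V} (hx : x ∉ S)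
    (hmax : ∀ w, w ∉ S → scanDeg G S w ≤ scanDeg G S x) :
    ∃ c', ScanState G k (insert x S) (H ⊔ newEdges G k S x) c' := by
  have hsep : ∀ {T : Finset V} {A B : Set V}, Separates (H ⊔ newEdges G k S x) T A B →
      Separates H T A B := fun hs => ⟨hs.1, fun a ha b hb hab => hs.2 a ha b hb (Or.inl hab)⟩
  -- If `x ∈ A`, the bound on either side passes to `B`, where it survives the scanning of `x`.
  have key : ∀ (T : Finset V) (A B : Set V), T.card < k →
      Separates (H ⊔ newEdges G k S x) T A B → x ∈ A →
      ∀ w ∈ B, w ∉ insert x S → scanDeg G (insert x S) w ≤ (T ∩ S).card := by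
    intro T A B hT hs hxA w hw hwS
    have hwS' : w ∉ S := fun hh => hwS (Finset.mem_insert_of_mem hh)
    have hTS : (T ∩ S).card ≤ T.card := Finset.card_le_card Finset.inter_subset_left
    have hd : scanDeg G S w ≤ (T ∩ S).card := by
      rcases h.one_side T A B hT (hsep hs) with h1 | h1
      · exact (hmax w hwS').trans (h1 x hxA hx)
      · exact h1 w hw hwS'
    rw [scanDeg_insert G hx, if_neg]
    · simpa using hd
    · intro hxw
      exact hs.2 x hxA w hw (Or.inr (newEdges_adj hxw hwS' (by omega)))
  have hmono : ∀ T : Finset V, (T ∩ S).card ≤ (T ∩ insert x S).card := fun T =>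
    Finset.card_le_card (Finset.inter_subset_inter_left (Finset.subset_insert x S))
  have hstep : ∀ (T : Finset V) (A B : Set V), T.card < k →
      Separates (H ⊔ newEdges G k S x) T A B → ∀ b ∈ B, x ∈ A → ¬ G.Adj x b := by
    intro T A B hT hs b hb hxA hxb
    by_cases hbS : b ∈ S
    · exact h.no_edge T B A hT (hsep hs).symm b hb hbS x hxA hxb.symm
    have hd : k ≤ scanDeg G S b := by
      by_contra hlt
      exact hs.2 x hxA b hb (Or.inr (newEdges_adj hxb hbS (by omega)))
    have hTS : (T ∩ S).card ≤ T.card := Finset.card_le_card Finset.inter_subset_left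
    have hdx := hmax b hbS
    rcases h.one_side T A B hT (hsep hs) with h1 | h1
    · have := h1 x hxA hx
      omega
    · have := h1 b hb hbS
      omega
  let N : Finset V := Finset.univ.filter fun b => G.Adj x b ∧ b ∉ S ∧ scanDeg G S b < k
  -- Charges of unscanned vertices with `k` scanned neighbours stay put.
  refine ⟨fun w => c w + if w ∈ N then 1 else 0, ?_, ?_, ?_, ?_, ?_, ?_⟩
  · refine sup_le h.le ?_
    intro a b hab
    simp only [newEdges, SimpleGraph.fromRel_adj] at hab
    rcases hab with ⟨-, ⟨rfl, hab, -⟩ | ⟨rfl, hab, -⟩⟩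
    · exact hab
    · exact hab.symm
  · have hsub : (newEdges G k S x).edgeSet ⊆ ((N.image fun b => s(x, b) : Finset (Sym2 V)) :
        Set (Sym2 V)) := by
      intro e
      induction e using Sym2.ind with
      | _ a b =>
        intro hab
        rw [SimpleGraph.mem_edgeSet] at hab
        simp only [newEdges, SimpleGraph.fromRel_adj] at hab
        rw [Finset.coe_image]
        rcases hab with ⟨-, ⟨rfl, hab⟩ | ⟨rfl, hab⟩⟩
        · exact ⟨b, by simpa [N] using hab, rfl⟩
        · exact ⟨a, by simpa [N] using hab, Sym2.eq_swap⟩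
    have h2 : (newEdges G k S x).edgeSet.ncard ≤ N.card := by
      refine (Set.ncard_le_ncard hsub (Finset.finite_toSet _)).trans ?_
      rw [Set.ncard_coe_finset]
      exact Finset.card_image_le
    rw [SimpleGraph.edgeSet_sup, Finset.sum_add_distrib]
    have h3 : (∑ w, if w ∈ N then 1 else 0) = N.card := by simp
    rw [h3]
    exact (Set.ncard_union_le _ _).trans (add_le_add h.card_le h2)
  · intro w
    have h1 := h.charge_le w
    split_ifs with hw
    · have hw' : G.Adj x w ∧ w ∉ S ∧ scanDeg G S w < k := by simpa [N] using hw
      have := h.charge_le_deg w hw'.2.1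
      omega
    · omega
  · intro w hw
    have hwS : w ∉ S := fun hh => hw (Finset.mem_insert_of_mem hh)
    have h1 := h.charge_le_deg w hwS
    rw [scanDeg_insert G hx]
    by_cases hN : w ∈ N
    · have hw' : G.Adj x w ∧ w ∉ S ∧ scanDeg G S w < k := by simpa [N] using hN
      rw [if_pos hN, if_pos hw'.1]
      omega
    · rw [if_neg hN]
      omega
  · intro T A B hT hs
    rcases hs.1 x with hxT | hxA | hxB
    · have hcard : (T ∩ insert x S).card = (T ∩ S).card + 1 := by
        rw [Finset.inter_insert_of_mem hxT, Finset.card_insert_of_notMem (by simp [hx])]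
      have hle : ∀ w, scanDeg G (insert x S) w ≤ scanDeg G S w + 1 := by
        intro w
        rw [scanDeg_insert G hx]
        split_ifs <;> omega
      rw [hcard]
      refine (h.one_side T A B hT (hsep hs)).imp ?_ ?_ <;>
      · intro h1 w hw hwS
        have := h1 w hw fun hh => hwS (Finset.mem_insert_of_mem hh)
        have := hle w
        omega
    · exact Or.inr fun w hw hwS => (key T A B hT hs hxA w hw hwS).trans (hmono T)
    · exact Or.inl fun w hw hwS => (key T B A hT hs.symm hxB w hw hwS).trans (hmono T)
  · intro T A B hT hs a ha haS b hb
    rcases Finset.mem_insert.1 haS with rfl | haS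
    · exact hstep T A B hT hs b hb ha
    · exact h.no_edge T A B hT (hsep hs) a ha haS b hb

open Classical in
lemma exists_scanState {V : Type} [Fintype V] (G : SimpleGraph V) (k : ℕ) (m : ℕ)
    (hm : m ≤ Fintype.card V) : ∃ S H c, S.card = m ∧ ScanState G k S H c := by
  induction m with
  | zero =>
    refine ⟨∅, ⊥, fun _ => 0, rfl, bot_le, by simp, by simp, by simp, ?_, by simp⟩
    intro T A B _ _
    left
    simp [scanDeg]
  | succ m ih =>
    obtain ⟨S, H, c, hS, h⟩ := ih (by omega)
    have hne : (Sᶜ).Nonempty := by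
      rw [← Finset.card_pos, Finset.card_compl]
      omega
    obtain ⟨x, hx, hmax⟩ := Finset.exists_max_image Sᶜ (scanDeg G S) hne
    have hx' : x ∉ S := by simpa using hx
    obtain ⟨c', h'⟩ := h.step hx' fun w hw => hmax w (by simpa using hw)
    exact ⟨_, _, c', by rw [Finset.card_insert_of_notMem hx', hS], h'⟩

/-- If every separation of `H` by fewer than `k` vertices is also one of `G`, then `H` inherits
`k`-connectivity from `G`. -/
lemma KConnected.of_separates {V : Type} {G H : SimpleGraph V} {k : ℕ} (hG : KConnected k G)
    (hsep : ∀ (T : Finset V) (A B : Set V), T.card < k → Separates H T A B → Separates G T A B) :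
    KConnected k H := by
  intro T hT
  have hc := hG T hT
  have hadj : ∀ a b, (G.induce ((↑T : Set V)ᶜ)).Adj a b →
      (H.induce ((↑T : Set V)ᶜ)).Reachable a b := by
    intro a b hab
    by_contra hnr
    have hs : Separates H T {w | ∃ hw, (H.induce ((↑T : Set V)ᶜ)).Reachable a ⟨w, hw⟩}
        {w | ∃ hw, ¬ (H.induce ((↑T : Set V)ᶜ)).Reachable a ⟨w, hw⟩} := by
      refine ⟨fun v => ?_, ?_⟩
      · by_cases hv : v ∈ T
        · exact Or.inl hv
        · have hv' : v ∈ ((↑T : Set V)ᶜ) := by simpa using hv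
          by_cases hr : (H.induce ((↑T : Set V)ᶜ)).Reachable a ⟨v, hv'⟩
          · exact Or.inr (Or.inl ⟨hv', hr⟩)
          · exact Or.inr (Or.inr ⟨hv', hr⟩)
      · rintro p ⟨hp, hrp⟩ q ⟨hq, hrq⟩ hpq
        refine hrq (hrp.trans (SimpleGraph.Adj.reachable ?_))
        exact hpq
    exact (hsep T _ _ hT hs).2 a ⟨a.2, SimpleGraph.Reachable.refl _⟩ b ⟨b.2, hnr⟩ hab
  refine { preconnected := fun u v => ?_, nonempty := hc.nonempty }
  obtain ⟨p⟩ := hc.preconnected u v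
  induction p with
  | nil => exact SimpleGraph.Reachable.refl _
  | cons h _ ih => exact (hadj _ _ h).trans ih

/-- The sparse certificate for `k`-connectivity. -/
lemma exists_sparse_kConnected {V : Type} [Fintype V] {G : SimpleGraph V} {k : ℕ}
    (hG : KConnected k G) :
    ∃ H ≤ G, KConnected k H ∧ H.edgeSet.ncard ≤ k * Fintype.card V := by
  obtain ⟨S, H, c, hS, h⟩ := exists_scanState G k (Fintype.card V) le_rfl
  have hS' : S = Finset.univ := Finset.card_eq_iff_eq_univ S |>.1 hS
  subst hS'
  refine ⟨H, h.le, hG.of_separates fun T A B hT hs => ⟨hs.1, fun a ha b hb =>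
    h.no_edge T A B hT hs a ha (Finset.mem_univ a) b hb⟩, h.card_le.trans ?_⟩
  calc ∑ w, c w ≤ ∑ _w : V, k := Finset.sum_le_sum fun w _ => h.charge_le w
    _ = k * Fintype.card V := by simp [mul_comm]

/-- If a simple graph `G'` on `n ≥ k + 1` vertices (`k ≥ 1`) contains a `k`-connected
spanning subgraph, and `opt` is the minimum number of edges of such a subgraph, then
`G'` contains a `k`-connected spanning subgraph with at most `(1 - 1/k)·opt + n`
edges. -/
theorem min_size_k_connected_subgraph {V : Type} [Fintype V]
    (G' : SimpleGraph V) (k : ℕ) (hk : 1 ≤ k) (hn : k + 1 ≤ Fintype.card V)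
    (opt : ℕ)
    (hopt : IsLeast {m : ℕ | ∃ H : SimpleGraph V, H ≤ G' ∧ KConnected k H ∧
      H.edgeSet.ncard = m} opt) :
    ∃ H : SimpleGraph V, H ≤ G' ∧ KConnected k H ∧
      (H.edgeSet.ncard : ℝ) ≤ (1 - 1 / (k : ℝ)) * opt + Fintype.card V := by
  obtain ⟨⟨H₀, hle, hconn, hcard⟩, hmin⟩ := hopt
  obtain ⟨H, hH, hHc, hHn⟩ := exists_sparse_kConnected hconn
  have hopt_le : opt ≤ k * Fintype.card V := (hmin ⟨H, hH.trans hle, hHc, rfl⟩).trans hHn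
  refine ⟨H₀, hle, hconn, ?_⟩
  rw [hcard]
  have hk0 : (0 : ℝ) < k := by exact_mod_cast hk
  have h1 : (opt : ℝ) / k ≤ Fintype.card V := by
    rw [div_le_iff₀ hk0, mul_comm]
    exact_mod_cast hopt_le
  have h2 : (1 - 1 / (k : ℝ)) * opt = opt - opt / k := by ring
  linarith
end
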